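/- arXiv:1205.3878 — 4 statements merged into one kernel-verified Lean document; each statement's English description precedes it below -/
import Mathlib

section
/- Let C be a binary code of length 16 with exactly 256 codewords and minimum distance 6, and let μ : Aut(C) → S_16 be the homomorphism sending the automorphism x ↦ (x ∘ σ⁻¹) + v to the coordinate permutation σ. Then the image μ(Aut(C)) is isomorphic as a group to the affine group AGL(4,2) of the vector space F_2^4 (the group of all maps y ↦ A·y + b with A ∈ GL(4,2) and b ∈ F_2^4, a group of order 322560, isomorphic to 2^4:A_8). -/
open Set

/-- Distance from a vertex to a code in the binary Hamming space. -/
noncomputable def distToCode {m : ℕ} (C : Set (Fin m → ZMod 2)) (x : Fin m → ZMod 2) : ℕ :=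
  sInf {d | ∃ c ∈ C, hammingDist x c = d}

/-- `C` has minimum distance `δ`. -/
def IsMinDist {m : ℕ} (C : Set (Fin m → ZMod 2)) (δ : ℕ) : Prop :=
  (∀ x ∈ C, ∀ y ∈ C, x ≠ y → δ ≤ hammingDist x y) ∧
  ∃ x ∈ C, ∃ y ∈ C, x ≠ y ∧ hammingDist x y = δ

/-- `C` is completely regular: the number of codewords at distance `k` from `γ`
depends only on `distToCode C γ` and `k`. -/
def IsCompletelyRegular {m : ℕ} (C : Set (Fin m → ZMod 2)) : Prop :=
  ∀ γ γ' : Fin m → ZMod 2, distToCode C γ = distToCode C γ' →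
    ∀ k : ℕ, {c ∈ C | hammingDist γ c = k}.ncard = {c ∈ C | hammingDist γ' c = k}.ncard

/-!
A binary `(16, 256, 6)` code attains the Delsarte linear programming bound, which forces all its
distances to lie in `{0, 6, 8, 10, 16}` and makes it an orthogonal array of strength `4`. A count
of characters then shows that the codewords at distance divisible by `8` from a given codeword form
a block of size `32` within which all distances are divisible by `8`. The differences inside blocks
span a self-orthogonal code `S` of dimension `5`, and every block is a coset of `S`. Half the weight
modulo `2` is a quadratic form on even words; read on the dual of `S`, it recovers from `S` alone
which differences occur between the blocks, so `S` determines the code up to translation. Hence a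
coordinate permutation extends to an automorphism of the code if and only if it preserves `S`.
Since `S` contains the all-one word and separates coordinates, it consists of the affine functions
on `F_2^4` under a suitable labelling of the coordinates, and its permutation group is `AGL(4, 2)`.
-/

namespace NordstromRobinson

variable {ι : Type*}

/-- The nontrivial character of `ZMod 2`, with values in `{1, -1} ⊆ ℤ`. -/
def signChar : AddChar (ZMod 2) ℤ := AddChar.zmodChar 2 (ζ := -1) (by norm_num)

/-- The Walsh character `x ↦ ∏ i ∈ S, (-1) ^ x i` of the binary space. -/
def walsh (S : Finset ι) : AddChar (ι → ZMod 2) ℤ :=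
  ∏ i ∈ S, signChar.compAddMonoidHom (Pi.evalAddMonoidHom (fun _ => ZMod 2) i)

lemma signChar_eq_ite (a : ZMod 2) : signChar a = if a ≠ 0 then -1 else 1 := by
  revert a; decide

lemma walsh_apply (S : Finset ι) (x : ι → ZMod 2) : walsh S x = ∏ i ∈ S, signChar (x i) := by
  simp [walsh, AddChar.prod_apply]

lemma walsh_empty (x : ι → ZMod 2) : walsh ∅ x = 1 := by
  simp [walsh_apply]

lemma walsh_mul_self (S : Finset ι) (x : ι → ZMod 2) : walsh S x * walsh S x = 1 := by
  rw [← AddChar.map_add_eq_mul, ZModModule.add_self, AddChar.map_zero_eq_one]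

lemma walsh_symmDiff [DecidableEq ι] (S T : Finset ι) (x : ι → ZMod 2) :
    walsh (symmDiff S T) x = walsh S x * walsh T x := by
  have h (i : ι) : signChar (x i) * signChar (x i) = 1 := by
    simpa [walsh_apply] using walsh_mul_self {i} x
  have extend {U : Finset ι} (hU : U ⊆ S ∪ T) :
      walsh U x = ∏ i ∈ S ∪ T, if i ∈ U then signChar (x i) else 1 := by
    rw [walsh_apply, Finset.prod_ite_mem, Finset.inter_eq_right.2 hU]
  rw [extend Finset.symmDiff_subset_union, extend Finset.subset_union_left,
    extend Finset.subset_union_right, ← Finset.prod_mul_distrib]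
  refine Finset.prod_congr rfl fun i _ => ?_
  by_cases hS : i ∈ S <;> by_cases hT : i ∈ T <;> simp [Finset.mem_symmDiff, hS, hT, h]

/-- `C` is an orthogonal array of strength `t`: every nontrivial Walsh character of weight at
most `t` has mean zero on `C`. -/
def HasStrength (C : Finset (ι → ZMod 2)) (t : ℕ) : Prop :=
  ∀ S : Finset ι, S.Nonempty → S.card ≤ t → ∑ x ∈ C, walsh S x = 0

lemma HasStrength.sum_walsh_mul_walsh [DecidableEq ι] {C : Finset (ι → ZMod 2)} {t : ℕ}
    {S T : Finset ι} (hC : HasStrength C t) (hST : S.card + T.card ≤ t) :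
    ∑ x ∈ C, walsh S x * walsh T x = if S = T then (C.card : ℤ) else 0 := by
  split_ifs with h
  · simp [h, walsh_mul_self]
  · simp_rw [← walsh_symmDiff]
    refine hC _ (Finset.symmDiff_nonempty.2 h) ?_
    exact (Finset.card_le_card Finset.symmDiff_subset_union).trans
      ((Finset.card_union_le S T).trans hST)

variable [Fintype ι]

lemma walsh_univ (x : ι → ZMod 2) : walsh Finset.univ x = (-1) ^ hammingNorm x := by
  simp [walsh_apply, signChar_eq_ite, Finset.prod_ite, hammingNorm]

/-- The binary Krawtchouk polynomial of degree `k`, evaluated at the weight of `z`: the sum of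
the Walsh characters of weight `k` at `z`. -/
def krawtchouk (k : ℕ) (z : ι → ZMod 2) : ℤ :=
  ∑ S ∈ Finset.powersetCard k Finset.univ, walsh S z

lemma krawtchouk_zero (z : ι → ZMod 2) : krawtchouk 0 z = 1 := by
  simp [krawtchouk, walsh_empty]

lemma krawtchouk_one (z : ι → ZMod 2) : krawtchouk 1 z = Fintype.card ι - 2 * hammingNorm z := by
  have h (a : ZMod 2) : signChar a = 1 - 2 * if a ≠ 0 then 1 else 0 := by revert a; decide
  simp only [krawtchouk, walsh_apply, Finset.powersetCard_one, Finset.sum_map, h, hammingNorm,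
    Function.Embedding.coeFn_mk, Finset.prod_singleton, Finset.sum_sub_distrib, ← Finset.mul_sum,
    Finset.sum_boole]
  simp

lemma newton_krawtchouk (k : ℕ) (z : ι → ZMod 2) : (k : ℤ) * krawtchouk k z = (-1) ^ (k + 1) *
    ∑ j ∈ Finset.range k, (-1) ^ j * krawtchouk j z * ∑ i, signChar (z i) ^ (k - j) := by
  have newton := congrArg (MvPolynomial.aeval fun i => signChar (z i))
    (MvPolynomial.mul_esymm_eq_sum ι ℤ k)
  rw [Finset.sum_filter, Finset.Nat.sum_antidiagonal_eq_sum_range_succ_mk,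
    Finset.sum_range_succ] at newton
  simp only [lt_irrefl, if_false, add_zero] at newton
  rw [Finset.sum_congr rfl fun j hj => if_pos (Finset.mem_range.1 hj)] at newton
  simpa [MvPolynomial.esymm, MvPolynomial.psum, krawtchouk, walsh_apply] using newton

lemma sum_signChar_pow (k : ℕ) (z : ι → ZMod 2) :
    ∑ i, signChar (z i) ^ k = if Even k then (Fintype.card ι : ℤ) else krawtchouk 1 z := by
  have hsq (a : ZMod 2) : signChar a ^ 2 = 1 := by revert a; decide
  split_ifs with hk
  · obtain ⟨j, rfl⟩ := hk
    simp [← two_mul, pow_mul, hsq]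
  · obtain ⟨j, rfl⟩ := Nat.not_even_iff_odd.1 hk
    simp [pow_succ, pow_mul, hsq, krawtchouk, walsh_apply, Finset.powersetCard_one]

lemma two_mul_krawtchouk_two (z : ι → ZMod 2) :
    2 * krawtchouk 2 z = krawtchouk 1 z ^ 2 - Fintype.card ι := by
  have newton : 2 * krawtchouk 2 z = krawtchouk 1 z * krawtchouk 1 z + -Fintype.card ι := by
    simpa [Finset.sum_range_succ, sum_signChar_pow, krawtchouk_zero, Nat.even_iff] using
      newton_krawtchouk 2 z
  linear_combination newton

lemma six_mul_krawtchouk_three (z : ι → ZMod 2) :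
    6 * krawtchouk 3 z = krawtchouk 1 z ^ 3 - (3 * Fintype.card ι - 2) * krawtchouk 1 z := by
  have newton : 3 * krawtchouk 3 z = krawtchouk 1 z + -(krawtchouk 1 z * Fintype.card ι) +
      krawtchouk 2 z * krawtchouk 1 z := by
    simpa [Finset.sum_range_succ, sum_signChar_pow, krawtchouk_zero, Nat.even_iff] using
      newton_krawtchouk 3 z
  linear_combination 2 * newton + krawtchouk 1 z * two_mul_krawtchouk_two z

lemma twentyFour_mul_krawtchouk_four (z : ι → ZMod 2) :
    24 * krawtchouk 4 z = krawtchouk 1 z ^ 4 - (6 * Fintype.card ι - 8) * krawtchouk 1 z ^ 2 +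
      3 * (Fintype.card ι : ℤ) ^ 2 - 6 * Fintype.card ι := by
  have newton : 4 * krawtchouk 4 z = krawtchouk 3 z * krawtchouk 1 z +
      (-(krawtchouk 2 z * Fintype.card ι) +
        (krawtchouk 1 z * krawtchouk 1 z + -Fintype.card ι)) := by
    simpa [Finset.sum_range_succ, sum_signChar_pow, krawtchouk_zero, Nat.even_iff] using
      newton_krawtchouk 4 z
  linear_combination 6 * newton + krawtchouk 1 z * six_mul_krawtchouk_three z -
    3 * (Fintype.card ι : ℤ) * two_mul_krawtchouk_two z

lemma sum_sum_walsh_mul_krawtchouk (C : Finset (ι → ZMod 2)) (T : Finset ι) (k : ℕ) :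
    ∑ x ∈ C, ∑ y ∈ C, walsh T (x + y) * krawtchouk k (x + y) =
      ∑ S ∈ Finset.powersetCard k Finset.univ, (∑ x ∈ C, walsh T x * walsh S x) ^ 2 := by
  simp_rw [krawtchouk, Finset.mul_sum, pow_two, Finset.sum_mul_sum, AddChar.map_add_eq_mul,
    mul_mul_mul_comm]
  rw [Finset.sum_congr rfl fun _ _ => Finset.sum_comm, Finset.sum_comm]

namespace HasStrength

variable {C : Finset (ι → ZMod 2)} {t k : ℕ} {T : Finset ι}

lemma sum_krawtchouk_mul_walsh (hC : HasStrength C t) (hT : k + T.card ≤ t) (x : ι → ZMod 2) :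
    ∑ w ∈ C, krawtchouk k (x + w) * walsh T w =
      if T.card = k then (C.card : ℤ) * walsh T x else 0 := by
  classical
  have inner (S : Finset ι) (hS : S ∈ Finset.powersetCard k Finset.univ) :
      ∑ w ∈ C, walsh S x * (walsh S w * walsh T w) =
        if S = T then (C.card : ℤ) * walsh T x else 0 := by
    rw [← Finset.mul_sum, hC.sum_walsh_mul_walsh (by rwa [(Finset.mem_powersetCard.1 hS).2])]
    split_ifs with h <;> simp [h, mul_comm]
  simp_rw [krawtchouk, Finset.sum_mul, AddChar.map_add_eq_mul, mul_assoc]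
  rw [Finset.sum_comm, Finset.sum_congr rfl inner, Finset.sum_ite_eq']
  simp

lemma sum_krawtchouk (hC : HasStrength C t) (hk : k ≠ 0) (hkt : k ≤ t) (x : ι → ZMod 2) :
    ∑ w ∈ C, krawtchouk k (x + w) = 0 := by
  simpa [walsh_empty, hk.symm] using
    hC.sum_krawtchouk_mul_walsh (T := ∅) (k := k) (by simpa using hkt) x

end HasStrength

/-- The polynomial on which the Delsarte linear programming bound for length `16` and distance
`6` is attained. -/
def lpCertificate (z : ι → ZMod 2) : ℤ :=
  40 + 40 * krawtchouk 1 z + 12 * krawtchouk 2 z + 7 * krawtchouk 3 z + krawtchouk 4 z +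
    walsh Finset.univ z * krawtchouk 3 z + walsh Finset.univ z * krawtchouk 4 z

lemma lpCertificate_zero (hι : Fintype.card ι = 16) : lpCertificate (0 : ι → ZMod 2) = 10240 := by
  simp [lpCertificate, krawtchouk, hι, Nat.choose]

-- In terms of `t = 16 - 2 * hammingNorm z`, twelve times the certificate is `t (t + 16) (t² - 16)`
-- on even weights and `12 (t + 4) (t² + 2 t - 14)` on odd weights.
lemma lpCertificate_nonpos (hι : Fintype.card ι = 16) {z : ι → ZMod 2} (hz : 6 ≤ hammingNorm z) :
    lpCertificate z ≤ 0 ∧ (lpCertificate z = 0 → hammingNorm z ∈ ({6, 8, 10, 16} : Finset ℕ)) := by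
  have hle : hammingNorm z ≤ 16 := hι ▸ hammingNorm_le_card_fintype
  have h1 := krawtchouk_one z
  have h2 := two_mul_krawtchouk_two z
  have h3 := six_mul_krawtchouk_three z
  have h4 := twentyFour_mul_krawtchouk_four z
  simp only [h1, hι] at h2 h3 h4
  simp only [lpCertificate, h1, hι, walsh_univ]
  generalize hammingNorm z = d at *
  interval_cases d <;> norm_num at * <;> omega

/-- The properties of a binary `(16, 256, 6)` code that are forced by equality in the linear
programming bound. -/
structure IsTight (C : Finset (ι → ZMod 2)) : Prop where
  card_index : Fintype.card ι = 16
  card_eq : C.card = 256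
  hammingNorm_mem : ∀ x ∈ C, ∀ y ∈ C, hammingNorm (x + y) ∈ ({0, 6, 8, 10, 16} : Finset ℕ)
  hasStrength : HasStrength C 4

lemma sum_sum_walsh_mul_krawtchouk_nonneg (C : Finset (ι → ZMod 2)) (T : Finset ι) (k : ℕ) :
    0 ≤ ∑ x ∈ C, ∑ y ∈ C, walsh T (x + y) * krawtchouk k (x + y) := by
  rw [sum_sum_walsh_mul_krawtchouk]
  exact Finset.sum_nonneg fun _ _ => sq_nonneg _

lemma hasStrength_of_sum_sum_krawtchouk {C : Finset (ι → ZMod 2)} {t : ℕ}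
    (h : ∀ k, k ≠ 0 → k ≤ t → ∑ x ∈ C, ∑ y ∈ C, krawtchouk k (x + y) = 0) : HasStrength C t := by
  intro S hS hSt
  have hsum := sum_sum_walsh_mul_krawtchouk C ∅ S.card
  simp only [walsh_empty, one_mul] at hsum
  rw [h S.card hS.card_ne_zero hSt, eq_comm,
    Finset.sum_eq_zero_iff_of_nonneg fun _ _ => sq_nonneg _] at hsum
  exact pow_eq_zero_iff two_ne_zero |>.1 (hsum S (by simp [Finset.mem_powersetCard]))

lemma card_sq_le_sum_sum_lpCertificate (C : Finset (ι → ZMod 2)) :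
    40 * (C.card : ℤ) ^ 2 + ∑ k ∈ Finset.Icc 1 4, ∑ x ∈ C, ∑ y ∈ C, krawtchouk k (x + y) ≤
      ∑ x ∈ C, ∑ y ∈ C, lpCertificate (x + y) := by
  have expand : ∑ x ∈ C, ∑ y ∈ C, lpCertificate (x + y) = 40 * (C.card : ℤ) ^ 2 +
      40 * ∑ x ∈ C, ∑ y ∈ C, krawtchouk 1 (x + y) + 12 * ∑ x ∈ C, ∑ y ∈ C, krawtchouk 2 (x + y) +
      7 * ∑ x ∈ C, ∑ y ∈ C, krawtchouk 3 (x + y) + ∑ x ∈ C, ∑ y ∈ C, krawtchouk 4 (x + y) +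
      ∑ x ∈ C, ∑ y ∈ C, walsh Finset.univ (x + y) * krawtchouk 3 (x + y) +
      ∑ x ∈ C, ∑ y ∈ C, walsh Finset.univ (x + y) * krawtchouk 4 (x + y) := by
    simp only [lpCertificate, Finset.sum_add_distrib, ← Finset.mul_sum, Finset.sum_const,
      nsmul_eq_mul]
    ring
  have nonneg (k : ℕ) := sum_sum_walsh_mul_krawtchouk_nonneg C ∅ k
  simp only [walsh_empty, one_mul] at nonneg
  rw [expand, show Finset.Icc 1 4 = {1, 2, 3, 4} by decide]
  simp only [Finset.mem_insert, OfNat.one_ne_ofNat, Nat.reduceEqDiff, Finset.mem_singleton, or_self,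
    not_false_eq_true, Finset.sum_insert, Finset.sum_singleton]
  linarith [nonneg 1, nonneg 2, nonneg 3, nonneg 4,
    sum_sum_walsh_mul_krawtchouk_nonneg C Finset.univ 3,
    sum_sum_walsh_mul_krawtchouk_nonneg C Finset.univ 4]

lemma sum_sum_lpCertificate_le {C : Finset (ι → ZMod 2)} (hι : Fintype.card ι = 16)
    (hcard : C.card = 256) (hdist : ∀ x ∈ C, ∀ y ∈ C, x ≠ y → 6 ≤ hammingNorm (x + y)) :
    ∑ x ∈ C, ∑ y ∈ C, lpCertificate (x + y) ≤ 40 * (C.card : ℤ) ^ 2 ∧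
      (∑ x ∈ C, ∑ y ∈ C, lpCertificate (x + y) = 40 * (C.card : ℤ) ^ 2 →
        ∀ x ∈ C, ∀ y ∈ C, x ≠ y → lpCertificate (x + y) = 0) := by
  classical
  let slack (x y : ι → ZMod 2) : ℤ := (if x = y then 10240 else 0) - lpCertificate (x + y)
  have slack_nonneg : ∀ x ∈ C, ∀ y ∈ C, 0 ≤ slack x y := by
    intro x hx y hy
    by_cases hxy : x = y
    · simp [slack, hxy, ZModModule.add_self, lpCertificate_zero hι]
    · simpa [slack, hxy] using (lpCertificate_nonpos hι (hdist x hx y hy hxy)).1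
  have row_nonneg : ∀ x ∈ C, 0 ≤ ∑ y ∈ C, slack x y :=
    fun x hx => Finset.sum_nonneg (slack_nonneg x hx)
  have sum_slack : ∑ x ∈ C, ∑ y ∈ C, slack x y =
      40 * (C.card : ℤ) ^ 2 - ∑ x ∈ C, ∑ y ∈ C, lpCertificate (x + y) := by
    simp [slack, hcard]
  refine ⟨by linarith [Finset.sum_nonneg row_nonneg], fun heq x hx y hy hxy => ?_⟩
  rw [heq, sub_self, Finset.sum_eq_zero_iff_of_nonneg row_nonneg] at sum_slack
  have slack_eq_zero :=
    (Finset.sum_eq_zero_iff_of_nonneg (slack_nonneg x hx)).1 (sum_slack x hx) y hy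
  simpa [slack, hxy] using slack_eq_zero

theorem isTight_of_card_of_hammingNorm {C : Finset (ι → ZMod 2)} (hι : Fintype.card ι = 16)
    (hcard : C.card = 256) (hdist : ∀ x ∈ C, ∀ y ∈ C, x ≠ y → 6 ≤ hammingNorm (x + y)) :
    IsTight C := by
  obtain ⟨upper, equality⟩ := sum_sum_lpCertificate_le hι hcard hdist
  have lower := card_sq_le_sum_sum_lpCertificate C
  have term_nonneg : ∀ k ∈ Finset.Icc 1 4, 0 ≤ ∑ x ∈ C, ∑ y ∈ C, krawtchouk k (x + y) :=
    fun k _ => by simpa [walsh_empty] using sum_sum_walsh_mul_krawtchouk_nonneg C ∅ k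
  have sum_nonneg := Finset.sum_nonneg term_nonneg
  refine ⟨hι, hcard, fun x hx y hy => ?_, hasStrength_of_sum_sum_krawtchouk fun k hk hk4 => ?_⟩
  · by_cases hxy : x = y
    · simp [hxy, ZModModule.add_self]
    · exact Finset.mem_insert_of_mem <| (lpCertificate_nonpos hι (hdist x hx y hy hxy)).2 <|
        equality (by linarith) x hx y hy hxy
  · exact (Finset.sum_eq_zero_iff_of_nonneg term_nonneg).1 (by linarith) k
      (Finset.mem_Icc.2 ⟨Nat.one_le_iff_ne_zero.2 hk, hk4⟩)

lemma hammingNorm_add_hammingNorm_add_one (z : ι → ZMod 2) :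
    hammingNorm z + hammingNorm (z + 1) = Fintype.card ι := by
  have h (a : ZMod 2) : a + 1 ≠ 0 ↔ ¬ a ≠ 0 := by revert a; decide
  simp only [hammingNorm, Pi.add_apply, Pi.one_apply, h]
  exact Finset.card_filter_add_card_filter_not _

lemma eq_add_one_of_hammingNorm {x y : ι → ZMod 2} (h : hammingNorm (x + y) = Fintype.card ι) :
    y = x + 1 := by
  have h0 : hammingNorm (x + y + 1) = 0 := by
    have := hammingNorm_add_hammingNorm_add_one (x + y)
    omega
  have hxy := hammingNorm_eq_zero.1 h0
  rw [add_right_comm, add_eq_zero_iff_neg_eq, ZModModule.neg_eq_self] at hxy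
  exact hxy.symm

lemma eq_of_hammingNorm_add_eq_zero {x y : ι → ZMod 2} (h : hammingNorm (x + y) = 0) : y = x := by
  rw [hammingNorm_eq_zero, add_eq_zero_iff_neg_eq, ZModModule.neg_eq_self] at h
  exact h.symm

/-- The codewords of `C` whose distance to `x` is divisible by `8`. For a tight code the blocks
of the codewords form a partition into eight parts, each a coset of one first-order Reed-Muller
code. -/
def block (C : Finset (ι → ZMod 2)) (x : ι → ZMod 2) : Finset (ι → ZMod 2) :=
  {w ∈ C | 8 ∣ hammingNorm (x + w)}

lemma mem_block {C : Finset (ι → ZMod 2)} {x w : ι → ZMod 2} :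
    w ∈ block C x ↔ w ∈ C ∧ 8 ∣ hammingNorm (x + w) :=
  Finset.mem_filter

/-- A family of codewords of `C`, no two of which lie in the same block. -/
structure IsTransversal {κ : Type*} (C : Finset (ι → ZMod 2)) (r : κ → ι → ZMod 2) : Prop where
  mem : ∀ i, r i ∈ C
  not_dvd : ∀ i j, i ≠ j → ¬ 8 ∣ hammingNorm (r i + r j)

lemma IsTransversal.cons {C : Finset (ι → ZMod 2)} {n : ℕ} {r : Fin n → ι → ZMod 2}
    {y : ι → ZMod 2} (hr : IsTransversal C r) (hy : y ∈ C)
    (hnot : ∀ i, ¬ 8 ∣ hammingNorm (r i + y)) :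
    IsTransversal C (Fin.cons y r : Fin (n + 1) → ι → ZMod 2) := by
  refine ⟨Fin.cases hy hr.mem, fun i j hij => ?_⟩
  cases i using Fin.cases <;> cases j using Fin.cases
  · exact absurd rfl hij
  · simpa only [Fin.cons_zero, Fin.cons_succ, add_comm] using hnot _
  · simpa only [Fin.cons_zero, Fin.cons_succ] using hnot _
  · simpa only [Fin.cons_succ] using hr.not_dvd _ _ fun h => hij (congrArg Fin.succ h)

namespace IsTight

variable {C : Finset (ι → ZMod 2)} {x y z : ι → ZMod 2}

lemma hammingNorm_cases (hC : IsTight C) (hx : x ∈ C) (hy : y ∈ C) :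
    y = x ∨ hammingNorm (x + y) = 6 ∨ hammingNorm (x + y) = 8 ∨ hammingNorm (x + y) = 10 ∨
      y = x + 1 := by
  have h := hC.hammingNorm_mem x hx y hy
  simp only [Finset.mem_insert, Finset.mem_singleton] at h
  rcases h with h | h | h | h | h
  · exact Or.inl (eq_of_hammingNorm_add_eq_zero h)
  · simp [h]
  · simp [h]
  · simp [h]
  · simp [eq_add_one_of_hammingNorm (h.trans hC.card_index.symm)]

lemma even_hammingNorm (hC : IsTight C) (hx : x ∈ C) (hy : y ∈ C) :
    Even (hammingNorm (x + y)) := by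
  have h := hC.hammingNorm_mem x hx y hy
  revert h
  generalize hammingNorm (x + y) = d
  revert d
  decide

lemma hammingNorm_one (hC : IsTight C) : hammingNorm (1 : ι → ZMod 2) = 16 := by
  simpa [hC.card_index] using hammingNorm_add_hammingNorm_add_one (0 : ι → ZMod 2)

lemma ne_add_one (hC : IsTight C) (x : ι → ZMod 2) : x ≠ x + 1 := by
  intro h
  have h1 := hC.hammingNorm_one
  rw [left_eq_add.1 h, hammingNorm_zero] at h1
  omega

lemma add_one_mem (hC : IsTight C) (hx : x ∈ C) : x + 1 ∈ C := by
  classical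
  by_contra hx1
  have hsum : ∑ w ∈ C, (6 * krawtchouk 3 (x + w) + 30 * krawtchouk 1 (x + w)) = 0 := by
    simp only [Finset.sum_add_distrib, ← Finset.mul_sum]
    rw [hC.hasStrength.sum_krawtchouk (by norm_num) (by norm_num),
      hC.hasStrength.sum_krawtchouk (by norm_num) (by norm_num), mul_zero, mul_zero, add_zero]
  have hterm : ∀ w ∈ C, 6 * krawtchouk 3 (x + w) + 30 * krawtchouk 1 (x + w) =
      if w = x then 3840 else 0 := by
    intro w hw
    rw [six_mul_krawtchouk_three, krawtchouk_one, hC.card_index]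
    by_cases hwx : w = x
    · simp [hwx, ZModModule.add_self]
    rcases hC.hammingNorm_cases hx hw with h | h | h | h | rfl
    · exact absurd h hwx
    · simp [h, hwx]
    · simp [h, hwx]
    · simp [h, hwx]
    · exact absurd hw hx1
  rw [Finset.sum_congr rfl hterm] at hsum
  simp [hx] at hsum

lemma sixteen_mul_ite_dvd (hC : IsTight C) (hx : x ∈ C) (hy : y ∈ C) :
    (if 8 ∣ hammingNorm (x + y) then 16 else 0 : ℤ) = -2 * krawtchouk 2 (x + y) +
      (if y = x then 256 else 0) + if y = x + 1 then 256 else 0 := by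
  have h2 := two_mul_krawtchouk_two (x + y)
  rw [krawtchouk_one, hC.card_index] at h2
  rw [neg_mul, h2]
  by_cases hyx : y = x
  · subst hyx
    simp [ZModModule.add_self, hC.ne_add_one]
  by_cases hyx1 : y = x + 1
  · subst hyx1
    simp [ZModModule.add_self, ← add_assoc, hC.hammingNorm_one, hyx]
  rcases hC.hammingNorm_cases hx hy with h | h | h | h | h
  · exact absurd h hyx
  · simp [h, hyx, hyx1]
  · simp [h, hyx, hyx1]
  · simp [h, hyx, hyx1]
  · exact absurd h hyx1

lemma sum_block_walsh (hC : IsTight C) (hx : x ∈ C) {T : Finset ι} (hT : T.card ≤ 2) :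
    16 * ∑ w ∈ block C x, walsh T w = if T.card = 0 then 512 else 0 := by
  classical
  have hone : walsh T (x + 1) = (-1) ^ T.card * walsh T x := by
    rw [AddChar.map_add_eq_mul, mul_comm]
    simp [walsh_apply, signChar_eq_ite]
  calc 16 * ∑ w ∈ block C x, walsh T w
      = ∑ w ∈ C, (if 8 ∣ hammingNorm (x + w) then 16 else 0) * walsh T w := by
        rw [block, Finset.sum_filter, Finset.mul_sum]
        exact Finset.sum_congr rfl fun w _ => by split_ifs <;> simp
    _ = ∑ w ∈ C, (-2 * (krawtchouk 2 (x + w) * walsh T w) +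
          (if w = x then 256 * walsh T w else 0) + if w = x + 1 then 256 * walsh T w else 0) := by
        refine Finset.sum_congr rfl fun w hw => ?_
        rw [hC.sixteen_mul_ite_dvd hx hw, add_mul, add_mul, ite_mul, ite_mul, zero_mul, mul_assoc]
    _ = -2 * (if T.card = 2 then 256 * walsh T x else 0) + 256 * walsh T x +
          256 * ((-1) ^ T.card * walsh T x) := by
        rw [Finset.sum_add_distrib, Finset.sum_add_distrib, ← Finset.mul_sum,
          hC.hasStrength.sum_krawtchouk_mul_walsh (by omega), Finset.sum_ite_eq', if_pos hx,
          Finset.sum_ite_eq', if_pos (hC.add_one_mem hx), hone, hC.card_eq]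
        rfl
    _ = if T.card = 0 then 512 else 0 := by
        interval_cases h : T.card
        · simp [Finset.card_eq_zero.1 h, walsh_empty]
        · simp
        · simp; ring

lemma card_block (hC : IsTight C) (hx : x ∈ C) : (block C x).card = 32 := by
  have h := hC.sum_block_walsh hx (T := ∅) (by simp)
  simp only [walsh_empty, Finset.sum_const, nsmul_eq_mul, mul_one, Finset.card_empty, if_true] at h
  omega

lemma hasStrength_block (hC : IsTight C) (hx : x ∈ C) : HasStrength (block C x) 2 := by
  intro T hT hT2
  simpa [hT.card_ne_zero] using hC.sum_block_walsh hx hT2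

lemma add_one_mem_block (hC : IsTight C) (hy : y ∈ block C x) : y + 1 ∈ block C x := by
  obtain ⟨hyC, hdvd⟩ := mem_block.1 hy
  refine mem_block.2 ⟨hC.add_one_mem hyC, ?_⟩
  have h := hammingNorm_add_hammingNorm_add_one (x + y)
  rw [hC.card_index] at h
  rw [← add_assoc]
  omega

-- The block has strength `2`, so the second moment of the distances to `y ∈ block C x` is exhausted
-- by the two words `y` and `y + 1`; all other distances in the block are `8`.
lemma dvd_hammingNorm_of_mem_block (hC : IsTight C) (hx : x ∈ C) (hy : y ∈ block C x)
    (hz : z ∈ block C x) : 8 ∣ hammingNorm (y + z) := by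
  classical
  by_cases hzy : z = y
  · simp [hzy, ZModModule.add_self]
  by_cases hzy1 : z = y + 1
  · simp [hzy1, ← add_assoc, ZModModule.add_self, hC.hammingNorm_one]
  have total : ∑ w ∈ block C x, krawtchouk 1 (y + w) ^ 2 = 512 := by
    have hsq (w : ι → ZMod 2) : krawtchouk 1 (y + w) ^ 2 = 2 * krawtchouk 2 (y + w) + 16 := by
      rw [two_mul_krawtchouk_two, hC.card_index]
      norm_num
    simp_rw [hsq]
    rw [Finset.sum_add_distrib, ← Finset.mul_sum,
      (hC.hasStrength_block hx).sum_krawtchouk two_ne_zero le_rfl]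
    simp [hC.card_block hx]
  have hsub : ({y, y + 1, z} : Finset (ι → ZMod 2)) ⊆ block C x := by
    simp [Finset.insert_subset_iff, hy, hz, hC.add_one_mem_block hy]
  have hle := Finset.sum_le_sum_of_subset_of_nonneg hsub fun w _ _ =>
    sq_nonneg (krawtchouk 1 (y + w))
  rw [total, Finset.sum_insert (by simp [hC.ne_add_one, Ne.symm hzy]),
    Finset.sum_pair (Ne.symm hzy1)] at hle
  simp only [krawtchouk_one, hC.card_index, ZModModule.add_self, ← add_assoc, zero_add,
    hammingNorm_zero, hC.hammingNorm_one] at hle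
  have : 16 - 2 * (hammingNorm (y + z) : ℤ) = 0 := by norm_num at hle; nlinarith
  omega

lemma exists_notMem_block (hC : IsTight C) {n : ℕ} (hn : n < 8) {r : Fin n → ι → ZMod 2}
    (hr : ∀ i, r i ∈ C) : ∃ y ∈ C, ∀ i, ¬ 8 ∣ hammingNorm (r i + y) := by
  classical
  have hcard : (Finset.univ.biUnion fun i => block C (r i)).card < C.card := by
    refine Finset.card_biUnion_le.trans_lt ?_
    simp only [hC.card_block (hr _), hC.card_eq, Finset.sum_const, Finset.card_univ,
      Fintype.card_fin, smul_eq_mul]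
    omega
  obtain ⟨y, hy, hnot⟩ := Finset.exists_mem_notMem_of_card_lt_card hcard
  refine ⟨y, hy, fun i hdvd => hnot ?_⟩
  exact Finset.mem_biUnion.2 ⟨i, Finset.mem_univ i, mem_block.2 ⟨hy, hdvd⟩⟩

lemma exists_isTransversal (hC : IsTight C) {n : ℕ} (hn : n ≤ 8) :
    ∃ r : Fin n → ι → ZMod 2, IsTransversal C r := by
  induction n with
  | zero => exact ⟨Fin.elim0, Fin.rec0, fun i => i.elim0⟩
  | succ n ih =>
    obtain ⟨r, hr⟩ := ih (by omega)
    obtain ⟨y, hy, hnot⟩ := hC.exists_notMem_block (by omega) hr.mem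
    exact ⟨Fin.cons y r, hr.cons hy hnot⟩

end IsTight

/-- Half of the weight, modulo `2`. On words of even weight this is a quadratic form with polar
form the dot product. -/
def halfWeight (x : ι → ZMod 2) : ZMod 2 := (hammingNorm x / 2 : ℕ)

lemma halfWeight_zero : halfWeight (0 : ι → ZMod 2) = 0 := by
  simp [halfWeight]

lemma hammingNorm_add_add_two_mul (x y : ι → ZMod 2) :
    hammingNorm (x + y) + 2 * (Finset.univ.filter fun i => x i ≠ 0 ∧ y i ≠ 0).card =
      hammingNorm x + hammingNorm y := by
  have h (a b : ZMod 2) : ((if a + b ≠ 0 then 1 else 0) + 2 * (if a ≠ 0 ∧ b ≠ 0 then 1 else 0) : ℕ)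
      = (if a ≠ 0 then 1 else 0) + if b ≠ 0 then 1 else 0 := by
    revert a b; decide
  simp only [hammingNorm, Finset.card_filter, Finset.mul_sum, ← Finset.sum_add_distrib]
  exact Finset.sum_congr rfl fun i _ => h (x i) (y i)

lemma dotProduct_eq_card (x y : ι → ZMod 2) :
    x ⬝ᵥ y = (Finset.univ.filter fun i => x i ≠ 0 ∧ y i ≠ 0).card := by
  have h (a b : ZMod 2) : a * b = if a ≠ 0 ∧ b ≠ 0 then 1 else 0 := by revert a b; decide
  simp [dotProduct, h]

lemma halfWeight_add {x y : ι → ZMod 2} (hx : Even (hammingNorm x)) (hy : Even (hammingNorm y)) :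
    halfWeight (x + y) = halfWeight x + halfWeight y + x ⬝ᵥ y := by
  have h := hammingNorm_add_add_two_mul x y
  rw [halfWeight, halfWeight, halfWeight, dotProduct_eq_card, ← Nat.cast_add, ← Nat.cast_add,
    ZMod.natCast_eq_natCast_iff']
  obtain ⟨a, ha⟩ := hx
  obtain ⟨b, hb⟩ := hy
  omega

lemma even_hammingNorm_add {x y : ι → ZMod 2} (hx : Even (hammingNorm x))
    (hy : Even (hammingNorm y)) : Even (hammingNorm (x + y)) := by
  have h := hammingNorm_add_add_two_mul x y
  rw [Nat.even_iff] at *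
  omega

lemma dotProduct_self_eq_zero {x : ι → ZMod 2} (hx : Even (hammingNorm x)) : x ⬝ᵥ x = 0 := by
  have h := halfWeight_add hx hx
  rwa [ZModModule.add_self, halfWeight_zero, CharTwo.add_self_eq_zero, zero_add, eq_comm] at h

lemma dotProduct_eq_sum_halfWeight {x y x' y' : ι → ZMod 2} (hxy : Even (hammingNorm (x + y)))
    (hxy' : Even (hammingNorm (x' + y'))) (hxx' : Even (hammingNorm (x + x'))) :
    (x + y) ⬝ᵥ (x' + y') = halfWeight (x + x') + halfWeight (x + y') + halfWeight (y + x') +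
      halfWeight (y + y') := by
  have hyx' : y + x' = (x + y) + (x + x') := by
    linear_combination -ZModModule.add_self x
  have hyy' : y + y' = (x + y) + ((x' + y') + (x + x')) := by
    linear_combination -(ZModModule.add_self x + ZModModule.add_self x')
  have hx_y' : x + y' = (x' + y') + (x + x') := by
    linear_combination -ZModModule.add_self x'
  rw [hyx', hyy', hx_y', halfWeight_add hxy (even_hammingNorm_add hxy' hxx'),
    halfWeight_add hxy' hxx', halfWeight_add hxy hxx', dotProduct_add (x + y) (x' + y') (x + x')]
  linear_combination -(2 * halfWeight (x + x') + halfWeight (x + y) + halfWeight (x' + y') +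
    (x' + y') ⬝ᵥ (x + x') + (x + y) ⬝ᵥ (x + x')) * (CharTwo.two_eq_zero : (2 : ZMod 2) = 0)

section DualCode

variable {K : Type*} [Field K]

/-- The dual of a linear code, its orthogonal complement for the dot product. -/
def dualCode (S : Submodule K (ι → K)) : Submodule K (ι → K) :=
  LinearMap.BilinForm.orthogonal (dotProductBilin K K) S

lemma mem_dualCode {S : Submodule K (ι → K)} {w : ι → K} :
    w ∈ dualCode S ↔ ∀ s ∈ S, s ⬝ᵥ w = 0 :=
  Iff.rfl

lemma finrank_add_finrank_dualCode (S : Submodule K (ι → K)) :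
    Module.finrank K S + Module.finrank K (dualCode S) = Fintype.card ι := by
  have hker : LinearMap.ker (dotProductBilin K K : LinearMap.BilinForm K (ι → K)) = ⊥ := by
    rw [LinearMap.ker_eq_bot']
    exact fun x hx => dotProduct_eq_zero_iff.1 fun y => LinearMap.congr_fun hx y
  have h := LinearMap.BilinForm.finrank_add_finrank_orthogonal' (B := dotProductBilin K K) S
  rw [hker, inf_bot_eq, finrank_bot, add_zero] at h
  exact h.trans (Module.finrank_fintype_fun_eq_card K)

lemma le_dualCode_comm {S T : Submodule K (ι → K)} (h : S ≤ dualCode T) : T ≤ dualCode S :=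
  fun t ht => mem_dualCode.2 fun s hs => (dotProduct_comm s t).trans (mem_dualCode.1 (h hs) t ht)

lemma mem_dualCode_sup_span {κ : Type*} {S : Submodule K (ι → K)} {u : κ → ι → K} {w : ι → K}
    (hw : w ∈ dualCode S) (hu : ∀ i, u i ⬝ᵥ w = 0) :
    w ∈ dualCode (S ⊔ Submodule.span K (Set.range u)) := by
  have hle : S ⊔ Submodule.span K (Set.range u) ≤ LinearMap.ker ((dotProductBilin K K).flip w) :=
    sup_le hw (Submodule.span_le.2 (Set.range_subset_iff.2 hu))
  exact hle

end DualCode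

section Frame

variable {κ : Type*} {S : Submodule (ZMod 2) (ι → ZMod 2)} {u : κ → ι → ZMod 2}
  {w : ι → ZMod 2}

/-- A family of words in the dual of `S` with Gram matrix `J - I`, all of even weight and on which
the quadratic form `halfWeight` takes the value `1`. -/
structure IsFrame (S : Submodule (ZMod 2) (ι → ZMod 2)) (u : κ → ι → ZMod 2) : Prop where
  mem_dual : ∀ i, u i ∈ dualCode S
  dotProduct_of_ne : ∀ i j, i ≠ j → u i ⬝ᵥ u j = 1
  even_hammingNorm : ∀ i, Even (hammingNorm (u i))
  halfWeight_eq : ∀ i, halfWeight (u i) = 1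

namespace IsFrame

lemma sum_dotProduct [DecidableEq κ] (hu : IsFrame S u) (T : Finset κ) (j : κ) :
    (∑ i ∈ T, u i) ⬝ᵥ u j = T.card + if j ∈ T then 1 else 0 := by
  have h (i : κ) : u i ⬝ᵥ u j = 1 + if i = j then 1 else 0 := by
    split_ifs with hij
    · rw [hij, dotProduct_self_eq_zero (hu.even_hammingNorm j), CharTwo.add_self_eq_zero]
    · rw [hu.dotProduct_of_ne i j hij, add_zero]
  simp [_root_.sum_dotProduct, h, Finset.sum_add_distrib]

lemma comp {κ' : Type*} (hu : IsFrame S u) {f : κ' → κ} (hf : Function.Injective f) :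
    IsFrame S (u ∘ f) where
  mem_dual i := hu.mem_dual (f i)
  dotProduct_of_ne _ _ hij := hu.dotProduct_of_ne _ _ (hf.ne hij)
  even_hammingNorm i := hu.even_hammingNorm (f i)
  halfWeight_eq i := hu.halfWeight_eq (f i)

lemma even_and_halfWeight_sum (hu : IsFrame S u) (T : Finset κ) :
    Even (hammingNorm (∑ i ∈ T, u i)) ∧
      halfWeight (∑ i ∈ T, u i) = ((T.card + 1).choose 2 : ℕ) := by
  classical
  induction T using Finset.induction_on with
  | empty => simp [halfWeight_zero]
  | insert j T hj ih =>
    rw [Finset.sum_insert hj, add_comm (u j)]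
    refine ⟨even_hammingNorm_add ih.1 (hu.even_hammingNorm j), ?_⟩
    rw [halfWeight_add ih.1 (hu.even_hammingNorm j), ih.2, hu.halfWeight_eq, hu.sum_dotProduct,
      if_neg hj, Finset.card_insert_of_notMem hj, Nat.choose_succ_succ' (T.card + 1) 1]
    push_cast
    rw [Nat.choose_one_right]
    push_cast
    ring

lemma le_dualCode_sup_span (hu : IsFrame S u) (hS : S ≤ dualCode S) :
    S ≤ dualCode (S ⊔ Submodule.span (ZMod 2) (Set.range u)) :=
  le_dualCode_comm (sup_le hS (Submodule.span_le.2 (Set.range_subset_iff.2 hu.mem_dual)))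

section EvenCard

variable [Fintype κ]

lemma eq_zero_of_sum_smul_mem (hu : IsFrame S u) (hκ : Even (Fintype.card κ)) {a : κ → ZMod 2}
    (ha : ∑ i, a i • u i ∈ S) : a = 0 := by
  classical
  have constant (j : κ) : a j = ∑ i, a i := by
    have hdot := mem_dualCode.1 (hu.mem_dual j) _ ha
    have hgram (i : κ) : u i ⬝ᵥ u j = 1 + if i = j then 1 else 0 := by
      simpa [eq_comm] using hu.sum_dotProduct {i} j
    simp only [_root_.sum_dotProduct, smul_dotProduct, hgram, smul_eq_mul, mul_add, mul_one,
      mul_ite, mul_zero, Finset.sum_add_distrib, Finset.sum_ite_eq', Finset.mem_univ,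
      if_true] at hdot
    exact (CharTwo.add_eq_zero.1 hdot).symm
  have total : ∑ i, a i = 0 := by
    rw [Finset.sum_congr rfl fun j _ => constant j, Finset.sum_const, Finset.card_univ,
      nsmul_eq_mul, (ZMod.natCast_eq_zero_iff_even).2 hκ, zero_mul]
  exact funext fun j => (constant j).trans total

lemma finrank_sup_span (hu : IsFrame S u) (hκ : Even (Fintype.card κ)) :
    Module.finrank (ZMod 2) ↥(S ⊔ Submodule.span (ZMod 2) (Set.range u)) =
      Module.finrank (ZMod 2) S + Fintype.card κ := by
  have hindep : LinearIndependent (ZMod 2) u := Fintype.linearIndependent_iff.2 fun a ha =>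
    congrFun (hu.eq_zero_of_sum_smul_mem hκ (ha ▸ S.zero_mem))
  have hdisj : S ⊓ Submodule.span (ZMod 2) (Set.range u) = ⊥ := by
    rw [← disjoint_iff, Submodule.disjoint_def]
    intro w hwS hwu
    obtain ⟨a, rfl⟩ := (Submodule.mem_span_range_iff_exists_fun (ZMod 2)).1 hwu
    simp [hu.eq_zero_of_sum_smul_mem hκ hwS]
  rw [← finrank_span_eq_card hindep, ← Submodule.finrank_sup_add_finrank_inf_eq, hdisj, finrank_bot,
    add_zero]

lemma two_mul_finrank_add_card_le (hu : IsFrame S u) (hκ : Even (Fintype.card κ))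
    (hS : S ≤ dualCode S) : 2 * Module.finrank (ZMod 2) S + Fintype.card κ ≤ Fintype.card ι := by
  have hle := Submodule.finrank_mono (hu.le_dualCode_sup_span hS)
  have hdual := finrank_add_finrank_dualCode (S ⊔ Submodule.span (ZMod 2) (Set.range u))
  rw [hu.finrank_sup_span hκ] at hdual
  omega

lemma mem_of_dotProduct_eq_zero (hu : IsFrame S u) (hκ : Even (Fintype.card κ))
    (hS : S ≤ dualCode S)
    (hdim : 2 * Module.finrank (ZMod 2) S + Fintype.card κ = Fintype.card ι)
    (hw : w ∈ dualCode S) (hwu : ∀ i, u i ⬝ᵥ w = 0) : w ∈ S := by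
  have hdual := finrank_add_finrank_dualCode (S ⊔ Submodule.span (ZMod 2) (Set.range u))
  rw [hu.finrank_sup_span hκ] at hdual
  rw [Submodule.eq_of_le_of_finrank_eq (hu.le_dualCode_sup_span hS) (by omega)]
  exact mem_dualCode_sup_span hw hwu

end EvenCard

section OddCard

variable {n : ℕ} {u : Fin (n + 1) → ι → ZMod 2}

lemma mem_of_dotProduct_eq_zero_of_odd (hu : IsFrame S u) (hn : Even n) (hS : S ≤ dualCode S)
    (hdim : 2 * Module.finrank (ZMod 2) S + n = Fintype.card ι) (hw : w ∈ dualCode S)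
    (hwu : ∀ i, w ⬝ᵥ u i = 0) : w ∈ S :=
  (hu.comp (Fin.castSucc_injective n)).mem_of_dotProduct_eq_zero (by simpa using hn) hS
    (by simpa using hdim) hw fun i => (dotProduct_comm _ _).trans (hwu _)

lemma sum_mem (hu : IsFrame S u) (hn : Even n) (hS : S ≤ dualCode S)
    (hdim : 2 * Module.finrank (ZMod 2) S + n = Fintype.card ι) : ∑ i, u i ∈ S := by
  classical
  refine hu.mem_of_dotProduct_eq_zero_of_odd hn hS hdim
    (Submodule.sum_mem _ fun i _ => hu.mem_dual i) fun j => ?_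
  rw [hu.sum_dotProduct, Finset.card_univ, Fintype.card_fin, if_pos (Finset.mem_univ j),
    Nat.cast_add, (ZMod.natCast_eq_zero_iff_even).2 hn]
  decide

lemma exists_add_sum_mem (hu : IsFrame S u) (hn : Even n) (hS : S ≤ dualCode S)
    (hdim : 2 * Module.finrank (ZMod 2) S + n = Fintype.card ι) (hw : w ∈ dualCode S) :
    ∃ T : Finset (Fin (n + 1)), w + ∑ i ∈ T, u i ∈ S := by
  classical
  let T : Finset (Fin (n + 1)) := {i | w ⬝ᵥ u i ≠ 0}
  have hbit (a : ZMod 2) : (if a ≠ 0 then 1 else 0) = a := by revert a; decide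
  have hmem (j : Fin (n + 1)) : (if j ∈ T then 1 else 0) = w ⬝ᵥ u j := by
    simp only [T, Finset.mem_filter_univ, hbit]
  have hcard : (T.card : ZMod 2) = 0 := by
    rw [← mem_dualCode.1 hw _ (hu.sum_mem hn hS hdim), dotProduct_comm, dotProduct_sum,
      Finset.card_filter]
    push_cast
    exact Finset.sum_congr rfl fun i _ => hbit _
  refine ⟨T, hu.mem_of_dotProduct_eq_zero_of_odd hn hS hdim
    (Submodule.add_mem _ hw (Submodule.sum_mem _ fun i _ => hu.mem_dual i)) fun j => ?_⟩
  rw [add_dotProduct, hu.sum_dotProduct, hcard, hmem, zero_add, CharTwo.add_self_eq_zero]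

end OddCard

-- The form takes the value `choose (t + 1) 2` on a sum of `t` of the seven vectors, which is odd
-- for `t ∈ {1, 2, 5, 6}`; the sum of all seven vectors lies in `S`, so `t` and `7 - t` are
-- equivalent.
lemma exists_card_le_two_add_sum_mem {u : Fin 7 → ι → ZMod 2} (hu : IsFrame S u)
    (hS : S ≤ dualCode S) (hdim : 2 * Module.finrank (ZMod 2) S + 6 = Fintype.card ι)
    (hS8 : ∀ s ∈ S, 8 ∣ hammingNorm s) (hw : w ∈ dualCode S) (hwq : halfWeight w = 1) :
    ∃ T : Finset (Fin 7), (T.card = 1 ∨ T.card = 2) ∧ w + ∑ i ∈ T, u i ∈ S := by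
  obtain ⟨T, hT⟩ := hu.exists_add_sum_mem (by decide) hS hdim hw
  have hcompl : w + ∑ i ∈ Tᶜ, u i ∈ S := by
    have h := S.add_mem hT (hu.sum_mem (by decide) hS hdim)
    rw [← Finset.sum_add_sum_compl T] at h
    rwa [add_assoc, ← add_assoc (∑ i ∈ T, u i), ZModModule.add_self, zero_add] at h
  have hodd : (((T.card + 1).choose 2 : ℕ) : ZMod 2) = 1 := by
    have hsum := hu.even_and_halfWeight_sum T
    have hs8 := hS8 _ hT
    have hs : halfWeight (w + ∑ i ∈ T, u i) = 0 := by
      obtain ⟨k, hk⟩ := hs8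
      rw [halfWeight, hk, ZMod.natCast_eq_zero_iff_even]
      exact ⟨2 * k, by omega⟩
    have hws : w = (w + ∑ i ∈ T, u i) + ∑ i ∈ T, u i := by
      rw [add_assoc, ZModModule.add_self, add_zero]
    have hdot : (w + ∑ i ∈ T, u i) ⬝ᵥ ∑ i ∈ T, u i = 0 :=
      mem_dualCode.1 (Submodule.sum_mem _ fun i _ => hu.mem_dual i) _ hT
    rw [hws, halfWeight_add (even_iff_two_dvd.2 (dvd_trans (by decide) hs8)) hsum.1, hs, hdot,
      zero_add, add_zero, hsum.2] at hwq
    exact hwq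
  have hcard : T.card + Tᶜ.card = 7 := Finset.card_add_card_compl T
  have hle : T.card ≤ 7 := by omega
  have : T.card = 1 ∨ T.card = 2 ∨ T.card = 5 ∨ T.card = 6 := by
    revert hodd
    generalize T.card = t at hle
    interval_cases t <;> decide
  rcases this with h | h | h | h
  · exact ⟨T, Or.inl h, hT⟩
  · exact ⟨T, Or.inr h, hT⟩
  · exact ⟨Tᶜ, Or.inr (by omega), hcompl⟩
  · exact ⟨Tᶜ, Or.inl (by omega), hcompl⟩

end IsFrame

end Frame

section BlockSpan

/-- The span of the differences of codewords in a common block. For a tight code every block is a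
coset of it, and it is equivalent to the first-order Reed-Muller code of length `16`. -/
def blockSpan (C : Finset (ι → ZMod 2)) : Submodule (ZMod 2) (ι → ZMod 2) :=
  Submodule.span (ZMod 2) {z | ∃ x ∈ C, ∃ y ∈ block C x, x + y = z}

lemma ncard_coe_submodule {α : Type*} [Finite α] (S : Submodule (ZMod 2) (α → ZMod 2)) :
    (S : Set (α → ZMod 2)).ncard = 2 ^ Module.finrank (ZMod 2) S := by
  rw [← Nat.card_coe_set_eq, SetLike.coe_sort_coe, Module.natCard_eq_pow_finrank (K := ZMod 2),
    Nat.card_zmod]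

lemma image_add_block_subset {C : Finset (ι → ZMod 2)} {x : ι → ZMod 2} (hx : x ∈ C) :
    (fun y => x + y) '' (block C x : Set (ι → ZMod 2)) ⊆ blockSpan C := by
  rintro _ ⟨y, hy, rfl⟩
  exact Submodule.subset_span ⟨x, hx, y, hy, rfl⟩

namespace IsTight

variable {C : Finset (ι → ZMod 2)} {x y z c c' s w : ι → ZMod 2}

lemma halfWeight_eq_zero_iff (hC : IsTight C) (hx : x ∈ C) (hy : y ∈ C) :
    halfWeight (x + y) = 0 ↔ 8 ∣ hammingNorm (x + y) := by
  have h := hC.hammingNorm_mem x hx y hy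
  rw [halfWeight]
  revert h
  generalize hammingNorm (x + y) = d
  revert d
  decide

lemma halfWeight_eq_one_iff (hC : IsTight C) (hx : x ∈ C) (hy : y ∈ C) :
    halfWeight (x + y) = 1 ↔ ¬ 8 ∣ hammingNorm (x + y) := by
  rw [← hC.halfWeight_eq_zero_iff hx hy]
  generalize halfWeight (x + y) = a
  revert a
  decide

lemma halfWeight_congr (hC : IsTight C) (hx : x ∈ C) (hy : y ∈ block C x) (hw : w ∈ C) :
    halfWeight (x + w) = halfWeight (y + w) := by
  obtain ⟨hyC, hdvd⟩ := mem_block.1 hy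
  have h : halfWeight (x + w) = 0 ↔ halfWeight (y + w) = 0 := by
    rw [hC.halfWeight_eq_zero_iff hx hw, hC.halfWeight_eq_zero_iff hyC hw]
    have hx' : x ∈ block C y := mem_block.2 ⟨hx, by rwa [add_comm]⟩
    exact ⟨fun h => hC.dvd_hammingNorm_of_mem_block hx hy (mem_block.2 ⟨hw, h⟩),
      fun h => hC.dvd_hammingNorm_of_mem_block hyC hx' (mem_block.2 ⟨hw, h⟩)⟩
  generalize halfWeight (x + w) = a at *
  generalize halfWeight (y + w) = b at *
  revert a b
  decide

lemma add_mem_dualCode_blockSpan (hC : IsTight C) (hc : c ∈ C) (hc' : c' ∈ C) :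
    c + c' ∈ dualCode (blockSpan C) := by
  have hle : blockSpan C ≤ LinearMap.ker ((dotProductBilin (ZMod 2) (ZMod 2)).flip (c + c')) := by
    refine Submodule.span_le.2 ?_
    rintro _ ⟨x, hx, y, hy, rfl⟩
    have hyC := (mem_block.1 hy).1
    change (x + y) ⬝ᵥ (c + c') = 0
    rw [dotProduct_eq_sum_halfWeight (hC.even_hammingNorm hx hyC) (hC.even_hammingNorm hc hc')
      (hC.even_hammingNorm hx hc), hC.halfWeight_congr hx hy hc, hC.halfWeight_congr hx hy hc',
      add_assoc, ZModModule.add_self]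
  exact hle

lemma blockSpan_le_dualCode (hC : IsTight C) : blockSpan C ≤ dualCode (blockSpan C) := by
  refine Submodule.span_le.2 ?_
  rintro _ ⟨x, hx, y, hy, rfl⟩
  exact hC.add_mem_dualCode_blockSpan hx (mem_block.1 hy).1

lemma dotProduct_eq_one (hC : IsTight C) {κ : Type*} {r : κ → ι → ZMod 2}
    (hr : IsTransversal C r) {i j k : κ} (hij : i ≠ j) (hik : i ≠ k) (hjk : j ≠ k) :
    (r i + r j) ⬝ᵥ (r i + r k) = 1 := by
  have hne {i j : κ} (hij : i ≠ j) : halfWeight (r i + r j) = 1 :=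
    (hC.halfWeight_eq_one_iff (hr.mem i) (hr.mem j)).2 (hr.not_dvd i j hij)
  rw [dotProduct_eq_sum_halfWeight (hC.even_hammingNorm (hr.mem _) (hr.mem _))
    (hC.even_hammingNorm (hr.mem _) (hr.mem _)) (hC.even_hammingNorm (hr.mem _) (hr.mem _)),
    hne hik, hne hij.symm, hne hjk, ZModModule.add_self, halfWeight_zero]
  decide

lemma isFrame (hC : IsTight C) {n : ℕ} {r : Fin (n + 1) → ι → ZMod 2} (hr : IsTransversal C r) :
    IsFrame (blockSpan C) fun i : Fin n => r i.succ + r 0 where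
  mem_dual _ := hC.add_mem_dualCode_blockSpan (hr.mem _) (hr.mem _)
  even_hammingNorm _ := hC.even_hammingNorm (hr.mem _) (hr.mem _)
  halfWeight_eq i := (hC.halfWeight_eq_one_iff (hr.mem _) (hr.mem _)).2
    (hr.not_dvd _ _ (Fin.succ_ne_zero i))
  dotProduct_of_ne i j hij := by
    rw [add_comm (r i.succ), add_comm (r j.succ)]
    exact hC.dotProduct_eq_one hr (Fin.succ_ne_zero i).symm (Fin.succ_ne_zero j).symm
      (by simpa using hij)

lemma finrank_blockSpan_le (hC : IsTight C) : Module.finrank (ZMod 2) (blockSpan C) ≤ 5 := by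
  obtain ⟨r, hr⟩ := hC.exists_isTransversal (n := 7) (by norm_num)
  have h := (hC.isFrame hr).two_mul_finrank_add_card_le (by decide) hC.blockSpan_le_dualCode
  rw [hC.card_index, Fintype.card_fin] at h
  omega

lemma ncard_image_add_block (hC : IsTight C) (hx : x ∈ C) :
    ((fun y => x + y) '' (block C x : Set (ι → ZMod 2))).ncard = 32 := by
  rw [Set.ncard_image_of_injective _ (add_right_injective x), Set.ncard_coe_finset,
    hC.card_block hx]

lemma nonempty (hC : IsTight C) : C.Nonempty := by
  rw [← Finset.card_pos, hC.card_eq]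
  norm_num

lemma finrank_blockSpan (hC : IsTight C) : Module.finrank (ZMod 2) (blockSpan C) = 5 := by
  obtain ⟨x, hx⟩ := hC.nonempty
  refine hC.finrank_blockSpan_le.antisymm ?_
  have h := Set.ncard_le_ncard (image_add_block_subset hx)
  rw [hC.ncard_image_add_block hx, ncard_coe_submodule] at h
  exact (Nat.pow_le_pow_iff_right one_lt_two).1 (by simpa using h)

lemma image_add_block (hC : IsTight C) (hx : x ∈ C) :
    (fun y => x + y) '' (block C x : Set (ι → ZMod 2)) = blockSpan C := by
  refine Set.eq_of_subset_of_ncard_le (image_add_block_subset hx) ?_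
  rw [hC.ncard_image_add_block hx, ncard_coe_submodule, hC.finrank_blockSpan]
  norm_num

lemma mem_blockSpan_iff (hC : IsTight C) (hc : c ∈ C) :
    s ∈ blockSpan C ↔ c + s ∈ C ∧ 8 ∣ hammingNorm s := by
  rw [← SetLike.mem_coe, ← hC.image_add_block hc]
  constructor
  · rintro ⟨y, hy, rfl⟩
    rwa [← add_assoc, ZModModule.add_self, zero_add, ← mem_block]
  · rintro ⟨hcs, hdvd⟩
    have hs : c + (c + s) = s := by linear_combination ZModModule.add_self c
    exact ⟨c + s, mem_block.2 ⟨hcs, by rwa [hs]⟩, hs⟩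

lemma dvd_hammingNorm_of_mem_blockSpan (hC : IsTight C) (hs : s ∈ blockSpan C) :
    8 ∣ hammingNorm s := by
  obtain ⟨c, hc⟩ := hC.nonempty
  exact ((hC.mem_blockSpan_iff hc).1 hs).2

lemma add_mem_of_mem_blockSpan (hC : IsTight C) (hc : c ∈ C) (hs : s ∈ blockSpan C) :
    c + s ∈ C :=
  ((hC.mem_blockSpan_iff hc).1 hs).1

lemma one_mem_blockSpan (hC : IsTight C) : 1 ∈ blockSpan C := by
  obtain ⟨c, hc⟩ := hC.nonempty
  exact (hC.mem_blockSpan_iff hc).2 ⟨hC.add_one_mem hc, by rw [hC.hammingNorm_one]; decide⟩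

lemma exists_add_mem_of_mem_dualCode (hC : IsTight C) (hw : w ∈ dualCode (blockSpan C))
    (hwq : halfWeight w = 1) : ∃ c ∈ C, c + w ∈ C := by
  obtain ⟨r, hr⟩ := hC.exists_isTransversal (n := 8) le_rfl
  obtain ⟨T, hT, hmem⟩ := (hC.isFrame hr).exists_card_le_two_add_sum_mem
    hC.blockSpan_le_dualCode (by rw [hC.finrank_blockSpan, hC.card_index])
    (fun s hs => hC.dvd_hammingNorm_of_mem_blockSpan hs) hw hwq
  have hsum : ∃ i j, w + (r i + r j) ∈ blockSpan C := by
    rcases hT with hT | hT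
    · obtain ⟨i, rfl⟩ := Finset.card_eq_one.1 hT
      rw [Finset.sum_singleton] at hmem
      exact ⟨i.succ, 0, hmem⟩
    · obtain ⟨i, j, hij, rfl⟩ := Finset.card_eq_two.1 hT
      rw [Finset.sum_pair hij, add_comm (r j.succ), ZModModule.add_add_add_cancel] at hmem
      exact ⟨i.succ, j.succ, hmem⟩
  obtain ⟨i, j, hij⟩ := hsum
  refine ⟨r i, hr.mem i, ?_⟩
  have hri : r i + w = r j + (w + (r i + r j)) := by
    linear_combination -ZModModule.add_self (r j)
  rw [hri]
  exact hC.add_mem_of_mem_blockSpan (hr.mem j) hij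

end IsTight

end BlockSpan

section Uniqueness

namespace IsTight

variable {C C' : Finset (ι → ZMod 2)} {c y z w : ι → ZMod 2}

lemma add_mem_of_mem_block (hC : IsTight C) {a b : ι → ZMod 2} (ha : a ∈ C) (hb : b ∈ block C a)
    (hbw : b + w ∈ C) : a + w ∈ C := by
  have hab : a + b ∈ blockSpan C := Submodule.subset_span ⟨a, ha, b, hb, rfl⟩
  have haw : a + w = b + w + (a + b) := by linear_combination -ZModModule.add_self b
  rw [haw]
  exact hC.add_mem_of_mem_blockSpan hbw hab

-- In terms of the eight blocks, `w` and `y` are pairs of blocks; `w ⬝ᵥ y = 1` says that they meet.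
lemma add_mem_or_add_add_mem (hC : IsTight C) (hc : c ∈ C) (hcy : c + y ∈ C)
    (hw : w ∈ dualCode (blockSpan C)) (hwq : halfWeight w = 1) (hyw : y ⬝ᵥ w = 1) :
    c + w ∈ C ∨ c + y + w ∈ C := by
  obtain ⟨b, hb, hbw⟩ := hC.exists_add_mem_of_mem_dualCode hw hwq
  have hbww : b + w + w ∈ C := by rwa [add_assoc, ZModModule.add_self, add_zero]
  by_contra! hnot
  have key {a b : ι → ZMod 2} (ha : a ∈ C) (hb : b ∈ C) (hbw : b + w ∈ C) (haw : a + w ∉ C) :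
      halfWeight (a + b) = 1 :=
    (hC.halfWeight_eq_one_iff ha hb).2 fun hdvd =>
      haw (hC.add_mem_of_mem_block ha (mem_block.2 ⟨hb, hdvd⟩) hbw)
  have hy : c + (c + y) = y := by linear_combination ZModModule.add_self c
  have hw' : b + (b + w) = w := by linear_combination ZModModule.add_self b
  have h := dotProduct_eq_sum_halfWeight (hC.even_hammingNorm hc hcy)
    (hC.even_hammingNorm hb hbw) (hC.even_hammingNorm hc hb)
  rw [hy, hw', hyw, key hc hb hbw hnot.1, key hc hbw hbww hnot.1, key hcy hb hbw hnot.2,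
    key hcy hbw hbww hnot.2] at h
  exact absurd h (by decide)

lemma sum_notMem_blockSpan (hC : IsTight C) {r : Fin 4 → ι → ZMod 2} (hr : IsTransversal C r) :
    ∑ i, r i ∉ blockSpan C := by
  intro hmem
  obtain ⟨y, hy, hnot⟩ := hC.exists_notMem_block (by norm_num) hr.mem
  have hframe : IsFrame (blockSpan C) fun i => r i + y := by
    simpa only [Fin.cons_succ, Fin.cons_zero] using hC.isFrame (hr.cons hy hnot)
  have hy4 : 4 • y = 0 := by
    rw [show 4 = 2 * 2 from rfl, mul_nsmul, ZModModule.char_nsmul_eq_zero]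
  have hzero := hframe.eq_zero_of_sum_smul_mem (a := 1) (by decide) (by
    simpa only [Pi.one_apply, one_smul, Finset.sum_add_distrib, Finset.sum_const,
      Finset.card_univ, Fintype.card_fin, hy4, add_zero] using hmem)
  exact one_ne_zero hzero

lemma exists_add_mem_add_mem (hC : IsTight C) (hy : y ∈ dualCode (blockSpan C))
    (hz : z ∈ dualCode (blockSpan C)) (hyq : halfWeight y = 1) (hzq : halfWeight z = 1)
    (hyz : y ⬝ᵥ z = 1) : ∃ c ∈ C, c + y ∈ C ∧ c + z ∈ C := by
  obtain ⟨c, hc, hcy⟩ := hC.exists_add_mem_of_mem_dualCode hy hyq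
  rcases hC.add_mem_or_add_add_mem hc hcy hz hzq hyz with h | h
  · exact ⟨c, hc, hcy, h⟩
  · exact ⟨c + y, hcy, by rwa [add_assoc, ZModModule.add_self, add_zero], h⟩

lemma halfWeight_sum (hC : IsTight C) {r : Fin 4 → ι → ZMod 2} (hr : IsTransversal C r) :
    halfWeight (∑ i, r i) = 0 := by
  have hsum : ∑ i, r i = ∑ i : Fin 3, (r i.succ + r 0) := by
    rw [Fin.sum_univ_four, Fin.sum_univ_three]
    simp only [Fin.succ_zero_eq_one, Fin.succ_one_eq_two, show (2 : Fin 3).succ = 3 from rfl]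
    linear_combination -ZModModule.add_self (r 0)
  rw [hsum, ((hC.isFrame hr).even_and_halfWeight_sum Finset.univ).2]
  decide

-- The pair of blocks of `C` with difference `r 1 + r 0` contains the block of `r 1 + t` or that of
-- `r 3 + t`. In the latter case its other member would be the block of `r 2 + t`, and the sum of
-- the four words `r i` would lie in the span.
lemma add_mem_of_isTransversal (hC : IsTight C) (hC' : IsTight C')
    (hspan : blockSpan C' = blockSpan C) {r : Fin 4 → ι → ZMod 2} (hr : IsTransversal C' r)
    {t : ι → ZMod 2} (h1 : r 1 + t ∈ C) (h2 : r 2 + t ∈ C) (h3 : r 3 + t ∈ C) :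
    r 0 + t ∈ C := by
  have hw : r 1 + r 0 ∈ dualCode (blockSpan C) :=
    hspan ▸ hC'.add_mem_dualCode_blockSpan (hr.mem 1) (hr.mem 0)
  have hwq : halfWeight (r 1 + r 0) = 1 :=
    (hC'.halfWeight_eq_one_iff (hr.mem 1) (hr.mem 0)).2 (hr.not_dvd 1 0 (by decide))
  have h13 : r 1 + t + (r 1 + r 3) = r 3 + t := by
    linear_combination ZModModule.add_self (r 1)
  have h10 : r 1 + t + (r 1 + r 0) = r 0 + t := by
    linear_combination ZModModule.add_self (r 1)
  have h := hC.add_mem_or_add_add_mem h1 (by rwa [h13]) hw hwq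
    (hC'.dotProduct_eq_one hr (by decide) (by decide) (by decide))
  rw [h10, h13] at h
  refine h.resolve_right fun h3' => ?_
  have hsum : r 2 + t + (r 3 + t + (r 1 + r 0)) = ∑ i, r i := by
    rw [Fin.sum_univ_four]
    linear_combination ZModModule.add_self t
  have hdvd : 8 ∣ hammingNorm (r 2 + t + (r 3 + t + (r 1 + r 0))) :=
    (hC.halfWeight_eq_zero_iff h2 h3').1 (hsum ▸ hC'.halfWeight_sum hr)
  refine hC'.sum_notMem_blockSpan hr (hspan ▸ Submodule.subset_span ?_)
  exact ⟨_, h2, _, mem_block.2 ⟨h3', hdvd⟩, hsum⟩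

lemma exists_forall_add_mem (hC : IsTight C) (hC' : IsTight C')
    (hspan : blockSpan C' = blockSpan C) : ∃ t, ∀ x ∈ C', x + t ∈ C := by
  obtain ⟨r, hr⟩ := hC'.exists_isTransversal (n := 3) (by norm_num)
  obtain ⟨c, hc, h1, h2⟩ : ∃ c ∈ C, c + (r 0 + r 1) ∈ C ∧ c + (r 0 + r 2) ∈ C :=
    hC.exists_add_mem_add_mem (hspan ▸ hC'.add_mem_dualCode_blockSpan (hr.mem 0) (hr.mem 1))
      (hspan ▸ hC'.add_mem_dualCode_blockSpan (hr.mem 0) (hr.mem 2))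
      ((hC'.halfWeight_eq_one_iff (hr.mem 0) (hr.mem 1)).2 (hr.not_dvd 0 1 (by decide)))
      ((hC'.halfWeight_eq_one_iff (hr.mem 0) (hr.mem 2)).2 (hr.not_dvd 0 2 (by decide)))
      (hC'.dotProduct_eq_one hr (by decide) (by decide) (by decide))
  have hmem (i : Fin 3) : r i + (r 0 + c) ∈ C := by
    have hi : r i + (r 0 + c) = c + (r 0 + r i) := by ring
    rw [hi]
    fin_cases i
    · simpa [ZModModule.add_self] using hc
    · exact h1
    · exact h2
  refine ⟨r 0 + c, fun x hx => ?_⟩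
  by_cases hblock : ∃ i, 8 ∣ hammingNorm (r i + x)
  · obtain ⟨i, hi⟩ := hblock
    have hs : r i + x ∈ blockSpan C :=
      hspan ▸ Submodule.subset_span ⟨r i, hr.mem i, x, mem_block.2 ⟨hx, hi⟩, rfl⟩
    have h := hC.add_mem_of_mem_blockSpan (hmem i) hs
    rwa [show r i + (r 0 + c) + (r i + x) = x + (r 0 + c) by
      linear_combination ZModModule.add_self (r i)] at h
  · exact hC.add_mem_of_isTransversal hC' hspan (hr.cons hx (not_exists.1 hblock)) (hmem 0)
      (hmem 1) (hmem 2)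

end IsTight

end Uniqueness

section HammingAut

variable {α : Type*}

/-- The coordinate permutation `x ↦ x ∘ σ⁻¹` of binary words. -/
def permute (σ : Equiv.Perm α) : (α → ZMod 2) ≃ₗ[ZMod 2] (α → ZMod 2) :=
  LinearEquiv.funCongrLeft (ZMod 2) (ZMod 2) σ.symm

lemma permute_apply (σ : Equiv.Perm α) (x : α → ZMod 2) (i : α) :
    permute σ x i = x (σ.symm i) :=
  rfl

/-- The automorphism `x ↦ x ∘ σ⁻¹ + v` of the binary Hamming graph. -/
def hammingAut (σ : Equiv.Perm α) (v : α → ZMod 2) : Equiv.Perm (α → ZMod 2) :=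
  (permute σ).toEquiv.trans (Equiv.addRight v)

lemma hammingAut_apply (σ : Equiv.Perm α) (v x : α → ZMod 2) :
    hammingAut σ v x = permute σ x + v :=
  rfl

lemma hammingAut_add_hammingAut (σ : Equiv.Perm α) (v x y : α → ZMod 2) :
    hammingAut σ v x + hammingAut σ v y = permute σ (x + y) := by
  rw [hammingAut_apply, hammingAut_apply, map_add]
  linear_combination ZModModule.add_self v

lemma hammingNorm_permute (σ : Equiv.Perm ι) (x : ι → ZMod 2) :
    hammingNorm (permute σ x) = hammingNorm x :=
  Finset.card_equiv σ.symm fun i => by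
    rw [Finset.mem_filter_univ, Finset.mem_filter_univ, permute_apply]

lemma hammingNorm_hammingAut_add (σ : Equiv.Perm ι) (v x y : ι → ZMod 2) :
    hammingNorm (hammingAut σ v x + hammingAut σ v y) = hammingNorm (x + y) := by
  rw [hammingAut_add_hammingAut, hammingNorm_permute]

lemma blockSpan_map_hammingAut (C : Finset (ι → ZMod 2)) (σ : Equiv.Perm ι) (v : ι → ZMod 2) :
    blockSpan (C.map (hammingAut σ v).toEmbedding) =
      (blockSpan C).map (permute σ).toLinearMap := by
  rw [blockSpan, blockSpan, Submodule.map_span]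
  congr 1
  ext z
  simp only [Set.mem_ofPred_eq, Set.mem_image, mem_block, Finset.mem_map, Equiv.coe_toEmbedding,
    LinearEquiv.coe_coe]
  constructor
  · rintro ⟨_, ⟨x, hx, rfl⟩, _, ⟨⟨y, hy, rfl⟩, hdvd⟩, rfl⟩
    rw [hammingNorm_hammingAut_add] at hdvd
    exact ⟨x + y, ⟨x, hx, y, ⟨hy, hdvd⟩, rfl⟩, (hammingAut_add_hammingAut σ v x y).symm⟩
  · rintro ⟨_, ⟨x, hx, y, ⟨hy, hdvd⟩, rfl⟩, rfl⟩
    exact ⟨_, ⟨x, hx, rfl⟩, _, ⟨⟨y, hy, rfl⟩, by rwa [hammingNorm_hammingAut_add]⟩,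
      hammingAut_add_hammingAut σ v x y⟩

namespace IsTight

variable {C : Finset (ι → ZMod 2)}

lemma map_hammingAut (hC : IsTight C) (σ : Equiv.Perm ι) (v : ι → ZMod 2) :
    IsTight (C.map (hammingAut σ v).toEmbedding) := by
  refine isTight_of_card_of_hammingNorm hC.card_index
    ((Finset.card_map _).trans hC.card_eq) fun x' hx' y' hy' hne => ?_
  obtain ⟨x, hx, rfl⟩ := Finset.mem_map.1 hx'
  obtain ⟨y, hy, rfl⟩ := Finset.mem_map.1 hy'
  have hxy : hammingNorm (x + y) ≠ 0 := fun h => hne (by rw [eq_of_hammingNorm_add_eq_zero h])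
  have hmem := hC.hammingNorm_mem x hx y hy
  simp only [Finset.mem_insert, Finset.mem_singleton] at hmem
  simp only [Equiv.coe_toEmbedding, hammingNorm_hammingAut_add]
  omega

theorem exists_map_hammingAut_eq_iff (hC : IsTight C) {σ : Equiv.Perm ι} :
    (∃ v, C.map (hammingAut σ v).toEmbedding = C) ↔
      (blockSpan C).map (permute σ).toLinearMap = blockSpan C := by
  constructor
  · rintro ⟨v, hv⟩
    rw [← blockSpan_map_hammingAut, hv]
  · intro hmap
    obtain ⟨v, hv⟩ := hC.exists_forall_add_mem (hC.map_hammingAut σ 0)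
      ((blockSpan_map_hammingAut C σ 0).trans hmap)
    refine ⟨v, Finset.eq_of_subset_of_card_le ?_ (Finset.card_map _).ge⟩
    intro z hz
    obtain ⟨x, hx, rfl⟩ := Finset.mem_map.1 hz
    have h := hv _ (Finset.mem_map_of_mem _ hx)
    rwa [Equiv.coe_toEmbedding, hammingAut_apply, add_zero] at h

end IsTight

end HammingAut

section ReedMuller

variable {K V α : Type*} [Field K] [AddCommGroup V] [Module K V]

/-- The first-order generalised Reed-Muller code on coordinates identified with the points of an
affine space by `φ`: the words that are restrictions of affine functions. -/
def affineCode (K : Type*) [Field K] [Module K V] (φ : α ≃ V) : Submodule K (α → K) where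
  carrier := {s | ∃ g : V →ᵃ[K] K, s = g ∘ φ}
  add_mem' := by
    rintro _ _ ⟨g, rfl⟩ ⟨g', rfl⟩
    exact ⟨g + g', rfl⟩
  zero_mem' := ⟨0, rfl⟩
  smul_mem' := by
    rintro a _ ⟨g, rfl⟩
    exact ⟨a • g, rfl⟩

lemma affineCode_eq_span {n : ℕ} (φ : α ≃ (Fin n → K)) :
    affineCode K φ =
      Submodule.span K {1} ⊔ Submodule.span K (Set.range fun m i => φ i m) := by
  apply le_antisymm
  · rintro _ ⟨g, rfl⟩
    have hg : g ∘ φ = g 0 • (1 : α → K) +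
        ∑ m, g.linear (fun j => if m = j then 1 else 0) • fun i => φ i m := by
      ext i
      have hdecomp : g (φ i) = g.linear (φ i) + g 0 := congrFun (AffineMap.decomp g) (φ i)
      rw [Function.comp_apply, hdecomp, LinearMap.pi_apply_eq_sum_univ, add_comm]
      simp [mul_comm]
    rw [hg]
    exact Submodule.add_mem_sup (Submodule.smul_mem _ _ (Submodule.mem_span_singleton_self _))
      (Submodule.sum_mem _ fun m _ => Submodule.smul_mem _ _ (Submodule.subset_span ⟨m, rfl⟩))
  · refine sup_le (Submodule.span_le.2 (Set.singleton_subset_iff.2 ?_))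
      (Submodule.span_le.2 (Set.range_subset_iff.2 fun m => ?_))
    · exact ⟨AffineMap.const K _ 1, rfl⟩
    · exact ⟨(LinearMap.proj m : (Fin n → K) →ₗ[K] K).toAffineMap, rfl⟩

lemma exists_eq_span_singleton_sup_span {S : Submodule K V} {a : V} (ha : a ∈ S) (ha0 : a ≠ 0)
    {n : ℕ} (hdim : Module.finrank K S = n + 1) :
    ∃ b : Fin n → V, S = Submodule.span K {a} ⊔ Submodule.span K (Set.range b) := by
  obtain ⟨W, hW⟩ := Submodule.exists_isCompl (Submodule.span K {(⟨a, ha⟩ : S)})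
  have : Module.Finite K S := Module.finite_of_finrank_pos (by omega)
  have hWn : Module.finrank K W = n := by
    have h := Submodule.finrank_add_eq_of_isCompl hW
    rw [finrank_span_singleton (Subtype.coe_ne_coe.1 ha0), hdim] at h
    omega
  let b := Module.finBasisOfFinrankEq K W hWn
  refine ⟨S.subtype ∘ W.subtype ∘ b, ?_⟩
  have hspan : Submodule.span K (Set.range (W.subtype ∘ b)) = W := by
    rw [Set.range_comp, ← Submodule.map_span, b.span_eq, Submodule.map_subtype_top]
  have hmap : Submodule.span K {a} = (Submodule.span K {(⟨a, ha⟩ : S)}).map S.subtype := by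
    rw [Submodule.map_span, Set.image_singleton, Submodule.subtype_apply]
  rw [Set.range_comp, ← Submodule.map_span, hspan, hmap, ← Submodule.map_sup, hW.sup_eq_top,
    Submodule.map_subtype_top]

theorem exists_affineCode_eq [Finite K] {S : Submodule K (α → K)} (hone : 1 ∈ S)
    (hsep : ∀ i j, (∀ s ∈ S, s i = s j) → i = j) {n : ℕ} (hdim : Module.finrank K S = n + 1)
    (hcard : Nat.card α = Nat.card K ^ n) :
    ∃ φ : α ≃ (Fin n → K), affineCode K φ = S := by
  have : Nonempty α := (Nat.card_pos_iff.1 (hcard ▸ Nat.pow_pos Nat.card_pos)).1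
  obtain ⟨b, hb⟩ := exists_eq_span_singleton_sup_span hone one_ne_zero hdim
  have hinj : Function.Injective fun i m => b m i := by
    intro i j hij
    refine hsep i j fun s hs => ?_
    have hle : S ≤ LinearMap.eqLocus (LinearMap.proj i) (LinearMap.proj j : (α → K) →ₗ[K] K) := by
      rw [hb]
      refine sup_le (Submodule.span_le.2 (Set.singleton_subset_iff.2 rfl))
        (Submodule.span_le.2 (Set.range_subset_iff.2 fun m => congrFun hij m))
    exact hle hs
  have hbij := hinj.bijective_of_nat_card_le (by rw [hcard, Nat.card_fun, Nat.card_fin])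
  exact ⟨Equiv.ofBijective _ hbij, (affineCode_eq_span _).trans hb.symm⟩

/-- The action of the affine group on coordinates that are identified with the points by `φ`. -/
def affinePerm (K : Type*) [Field K] [Module K V] (φ : α ≃ V) : (V ≃ᵃ[K] V) →* Equiv.Perm α where
  toFun e := φ.symm.permCongr e.toEquiv
  map_one' := by ext i; simp [AffineEquiv.one_def]
  map_mul' e e' := by ext i; simp [AffineEquiv.mul_def]

lemma affinePerm_apply (φ : α ≃ V) (e : V ≃ᵃ[K] V) (i : α) :
    affinePerm K φ e i = φ.symm (e (φ i)) :=
  rfl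

lemma affinePerm_injective (φ : α ≃ V) : Function.Injective (affinePerm K φ) :=
  φ.symm.permCongr.injective.comp AffineEquiv.toEquiv_injective

lemma mem_range_affinePerm_iff {n : ℕ} {φ : α ≃ (Fin n → K)} {σ : Equiv.Perm α} :
    σ ∈ (affinePerm K φ).range ↔ ∀ s ∈ affineCode K φ, s ∘ σ ∈ affineCode K φ := by
  constructor
  · rintro ⟨e, rfl⟩ _ ⟨g, rfl⟩
    refine ⟨g.comp e.toAffineMap, funext fun i => ?_⟩
    simp [affinePerm_apply]
  · intro h
    have hcoord (m : Fin n) : ∃ g : (Fin n → K) →ᵃ[K] K, ∀ i, φ (σ i) m = g (φ i) := by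
      obtain ⟨g, hg⟩ := h (fun i => φ i m)
        ⟨(LinearMap.proj m : (Fin n → K) →ₗ[K] K).toAffineMap, rfl⟩
      exact ⟨g, congrFun hg⟩
    choose g hg using hcoord
    have hpi (y : Fin n → K) : AffineMap.pi g y = φ (σ (φ.symm y)) := by
      ext m
      rw [hg, Equiv.apply_symm_apply, AffineMap.pi_apply]
    have hbij : Function.Bijective (AffineMap.pi g) := by
      rw [show ⇑(AffineMap.pi g) = φ.permCongr σ from funext hpi]
      exact (φ.permCongr σ).bijective
    refine ⟨AffineEquiv.ofBijective hbij, Equiv.ext fun i => ?_⟩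
    rw [affinePerm_apply, AffineEquiv.ofBijective_apply, hpi, Equiv.symm_apply_apply,
      Equiv.symm_apply_apply]

lemma map_permute_eq_iff [Finite α] {S : Submodule (ZMod 2) (α → ZMod 2)} {σ : Equiv.Perm α} :
    S.map (permute σ).toLinearMap = S ↔ ∀ s ∈ S, s ∘ σ ∈ S := by
  have permute_comp (s : α → ZMod 2) : permute σ (s ∘ σ) = s := by
    ext i
    rw [permute_apply, Function.comp_apply, Equiv.apply_symm_apply]
  constructor
  · intro h s hs
    rw [← h] at hs
    obtain ⟨s', hs', hss'⟩ := hs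
    rwa [show s ∘ σ = s' from (permute σ).injective ((permute_comp s).trans hss'.symm)]
  · intro h
    have hle : S ≤ S.map (permute σ).toLinearMap :=
      fun s hs => ⟨s ∘ σ, h s hs, permute_comp s⟩
    exact (Submodule.eq_of_le_of_finrank_eq hle ((permute σ).finrank_map_eq S).symm).symm

end ReedMuller

namespace IsTight

variable {C : Finset (ι → ZMod 2)}

lemma eq_of_forall_mem_blockSpan (hC : IsTight C) {i j : ι}
    (h : ∀ s ∈ blockSpan C, s i = s j) : i = j := by
  classical
  by_contra hij
  obtain ⟨x, hx⟩ := hC.nonempty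
  have hone : ∀ w ∈ block C x, walsh {i, j} (x + w) = 1 := by
    intro w hw
    rw [walsh_apply, Finset.prod_pair hij,
      h _ (Submodule.subset_span ⟨x, hx, w, hw, rfl⟩), signChar_eq_ite]
    split_ifs <;> norm_num
  have hzero : ∑ w ∈ block C x, walsh {i, j} (x + w) = 0 := by
    simp_rw [AddChar.map_add_eq_mul]
    rw [← Finset.mul_sum, hC.hasStrength_block hx _ (Finset.insert_nonempty _ _)
      Finset.card_le_two, mul_zero]
  rw [Finset.sum_congr rfl hone, Finset.sum_const, hC.card_block hx] at hzero
  norm_num at hzero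

theorem exists_affineCode_eq_blockSpan (hC : IsTight C) :
    ∃ φ : ι ≃ (Fin 4 → ZMod 2), affineCode (ZMod 2) φ = blockSpan C :=
  exists_affineCode_eq hC.one_mem_blockSpan (fun _ _ => hC.eq_of_forall_mem_blockSpan)
    hC.finrank_blockSpan (by rw [Nat.card_eq_fintype_card, hC.card_index, Nat.card_zmod]; norm_num)

theorem mem_range_affinePerm_iff_exists_map_hammingAut (hC : IsTight C) {φ : ι ≃ (Fin 4 → ZMod 2)}
    (hφ : affineCode (ZMod 2) φ = blockSpan C) {σ : Equiv.Perm ι} :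
    σ ∈ (affinePerm (ZMod 2) φ).range ↔ ∃ v, C.map (hammingAut σ v).toEmbedding = C := by
  rw [hC.exists_map_hammingAut_eq_iff, mem_range_affinePerm_iff, hφ,
    map_permute_eq_iff]

end IsTight

lemma hammingDist_eq_hammingNorm_add (x y : ι → ZMod 2) :
    hammingDist x y = hammingNorm (x + y) := by
  rw [hammingDist_eq_hammingNorm, ZModModule.neg_eq_self]

end NordstromRobinson

/-- For a binary `(16, 256, 6)` code `C`, the image of `Aut(C)` under the projection
to coordinate permutations is isomorphic to the affine group `AGL(4,2) ≅ 2^4:A_8`. -/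
theorem stmt_11 (C : Set (Fin 16 → ZMod 2)) (hcard : C.ncard = 256)
    (hd : IsMinDist C 6) :
    ∃ G : Subgroup (Equiv.Perm (Fin 16)),
      (G : Set (Equiv.Perm (Fin 16))) =
        {σ : Equiv.Perm (Fin 16) | ∃ v : Fin 16 → ZMod 2,
          (fun α => (fun i => α (σ.symm i)) + v) '' C = C} ∧
      Nonempty (G ≃* ((Fin 4 → ZMod 2) ≃ᵃ[ZMod 2] (Fin 4 → ZMod 2))) := by
  lift C to Finset (Fin 16 → ZMod 2) using Set.toFinite C
  have hC : NordstromRobinson.IsTight C := by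
    refine NordstromRobinson.isTight_of_card_of_hammingNorm (Fintype.card_fin 16)
      (by rwa [Set.ncard_coe_finset] at hcard) fun x hx y hy hne => ?_
    rw [← NordstromRobinson.hammingDist_eq_hammingNorm_add]
    exact hd.1 x hx y hy hne
  obtain ⟨φ, hφ⟩ := hC.exists_affineCode_eq_blockSpan
  refine ⟨(NordstromRobinson.affinePerm (ZMod 2) φ).range, ?_,
    ⟨(MonoidHom.ofInjective (NordstromRobinson.affinePerm_injective φ)).symm⟩⟩
  ext σ
  rw [SetLike.mem_coe, hC.mem_range_affinePerm_iff_exists_map_hammingAut hφ]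
  refine exists_congr fun v => ?_
  rw [← Finset.coe_inj, Finset.coe_map]
  rfl
end

section
/- Let C be a binary code of length 16 with exactly 256 codewords and minimum distance 6, containing the zero vector, and let K = {v ∈ F_2^16 : v + C = C} be the set of vectors whose translation fixes C setwise. Then K is an F_2-linear subspace of F_2^16, K ⊆ C, |K| = 32, and every nonzero vector of K has weight 8 or 16. (For the Nordstrom-Robinson code, K is the Reed-Muller code R(1,4).) -/
open Set

/-!
A polynomial that makes Delsarte's linear programming bound tight for `(16, 256, 6)` forces all
distances in `C` to lie in `{0, 6, 8, 10, 16}` and all characters of weight `1, …, 4` to sum to zero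
over `C`. The latter yields exact averages over `C` of polynomials of degree at most four in
`d(c, z)`. One of them shows that `4 ∣ d(c, y)` holds for exactly 32 codewords `c`, for each
codeword `y`; another one recognises `z` as a codeword as soon as the distances from `z` to `C` are
even and at most 32 of them are multiples of four. In particular `C` is closed under complement.

The orthogonality relation `∑ c, K_2(d(c, x)) * K_2(d(c, z)) = 256 * K_2(d(x, z))` shows that
`4 ∣ d(x, y)` is an equivalence relation on `C`. Hence a codeword `r` in the class of `0` is
orthogonal to `C`, translation by `r` preserves distances to `C` modulo four, and the recognition
criterion gives `r + C ⊆ C`. Conversely, a codeword `v` outside that class with `v + C ⊆ C` is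
excluded by choosing `c`, `d` in `C` with `d ⬝ v = d ⬝ c = d ⬝ (v + c) = 1`.
-/

namespace BinaryCode

open Finset Polynomial

section Walsh

variable {ι : Type*} [Fintype ι]

/-- The Walsh character `x ↦ (-1) ^ (u ⬝ x)` of `ι → ZMod 2`, valued in `ℤ` so that character sums
of codes can be compared by order. -/
def walsh (u x : ι → ZMod 2) : ℤ := ((-1 : ℤˣ) ^ (u ⬝ᵥ x) : ℤˣ)

@[simp]
lemma walsh_zero_left (x : ι → ZMod 2) : walsh 0 x = 1 := by
  simp [walsh]

lemma walsh_comm (u x : ι → ZMod 2) : walsh u x = walsh x u := by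
  rw [walsh, walsh, dotProduct_comm]

lemma walsh_add_right (u x y : ι → ZMod 2) : walsh u (x + y) = walsh u x * walsh u y := by
  rw [walsh, dotProduct_add, uzpow_add, Units.val_mul, walsh, walsh]

lemma walsh_add_left (u v x : ι → ZMod 2) : walsh (u + v) x = walsh u x * walsh v x := by
  simp only [walsh_comm _ x, walsh_add_right]

lemma walsh_eq_prod (u x : ι → ZMod 2) :
    walsh u x = ∏ i, (((-1 : ℤˣ) ^ (u i * x i) : ℤˣ) : ℤ) := by
  classical
  have uzpow_sum (s : Finset ι) : (-1 : ℤˣ) ^ (∑ i ∈ s, u i * x i) =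
      ∏ i ∈ s, (-1 : ℤˣ) ^ (u i * x i) := by
    induction s using Finset.induction_on with
    | empty => simp
    | insert i s hi ih => rw [sum_insert hi, prod_insert hi, uzpow_add, ih]
  rw [walsh, dotProduct, uzpow_sum, Units.coe_prod]

lemma hammingDist_eq_hammingNorm_add (x y : ι → ZMod 2) :
    hammingDist x y = hammingNorm (x + y) := by
  rw [hammingDist_eq_hammingNorm, ZModModule.neg_eq_self]

lemma hammingDist_add_one_left (x y : ι → ZMod 2) :
    hammingDist (x + 1) y = Fintype.card ι - hammingDist x y := by
  classical
  have disagree_iff : ∀ a b : ZMod 2, a + 1 ≠ b ↔ ¬ a ≠ b := by decide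
  simp only [hammingDist, Pi.add_apply, Pi.one_apply, disagree_iff]
  rw [filter_not, card_sdiff_of_subset (filter_subset _ _), card_univ]

lemma hammingDist_eq_card_iff {x y : ι → ZMod 2} :
    hammingDist x y = Fintype.card ι ↔ x = y + 1 := by
  have disagree_iff : ∀ a b : ZMod 2, a ≠ b ↔ a = b + 1 := by decide
  simp [hammingDist, card_filter_eq_iff, funext_iff, disagree_iff, ← card_univ]

lemma hammingNorm_add_add_two_mul (x y : ι → ZMod 2) :
    hammingNorm (x + y) + 2 * #{i | x i ≠ 0 ∧ y i ≠ 0} = hammingNorm x + hammingNorm y := by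
  simp only [hammingNorm, card_filter, mul_sum, ← sum_add_distrib]
  refine sum_congr rfl fun i _ ↦ ?_
  have key : ∀ a b : ZMod 2, (if a + b ≠ 0 then 1 else 0) + 2 * (if a ≠ 0 ∧ b ≠ 0 then 1 else 0) =
      (if a ≠ 0 then 1 else 0) + if b ≠ 0 then 1 else 0 := by decide
  exact key (x i) (y i)

lemma dotProduct_eq_card (x y : ι → ZMod 2) : x ⬝ᵥ y = (#{i | x i ≠ 0 ∧ y i ≠ 0} : ZMod 2) := by
  rw [dotProduct, card_filter, Nat.cast_sum]
  refine sum_congr rfl fun i _ ↦ ?_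
  generalize x i = a, y i = b
  revert a b
  decide

lemma dotProduct_eq_zero_iff_modEq (x y : ι → ZMod 2) :
    x ⬝ᵥ y = 0 ↔ hammingNorm (x + y) ≡ hammingNorm x + hammingNorm y [MOD 4] := by
  rw [dotProduct_eq_card, ZMod.natCast_eq_zero_iff, Nat.ModEq]
  have := hammingNorm_add_add_two_mul x y
  omega

end Walsh

section Krawtchouk

/-- The value at `w` of the Krawtchouk polynomial of degree `k` for binary words of length `n`.
It is meant for `w ≤ n`, as `n - w` is truncated. -/
def krawtchouk (n k w : ℕ) : ℤ :=
  ∑ p ∈ antidiagonal k, (-1) ^ p.1 * (w.choose p.1 : ℤ) * ((n - w).choose p.2 : ℤ)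

@[simp]
lemma krawtchouk_zero_left (n w : ℕ) : krawtchouk n 0 w = 1 := by
  simp [krawtchouk]

lemma coeff_one_sub_X_pow (w k : ℕ) :
    (((1 : ℤ[X]) - X) ^ w).coeff k = (-1) ^ k * (w.choose k : ℤ) := by
  have : ((1 : ℤ[X]) - X) ^ w = ((1 + X) ^ w).comp (C (-1) * X) := by simp [sub_eq_add_neg]
  rw [this, comp_C_mul_X_coeff, coeff_one_add_X_pow, mul_comm]

lemma krawtchouk_eq_coeff (n k w : ℕ) :
    krawtchouk n k w = (((1 : ℤ[X]) - X) ^ w * (1 + X) ^ (n - w)).coeff k := by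
  simp only [krawtchouk, coeff_mul, coeff_one_sub_X_pow, coeff_one_add_X_pow]

variable {ι : Type*} [Fintype ι] [DecidableEq ι]

lemma sum_walsh_mul_X_pow (x : ι → ZMod 2) :
    ∑ u, Polynomial.C (walsh u x) * X ^ hammingNorm u =
      (1 - X) ^ hammingNorm x * (1 + X) ^ (Fintype.card ι - hammingNorm x) := by
  let term (i : ι) (a : ZMod 2) : ℤ[X] :=
    Polynomial.C (((-1 : ℤˣ) ^ (a * x i) : ℤˣ) : ℤ) * if a ≠ 0 then X else 1
  have prod_term (u : ι → ZMod 2) :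
      Polynomial.C (walsh u x) * X ^ hammingNorm u = ∏ i, term i (u i) := by
    simp only [term, prod_mul_distrib, ← map_prod, ← walsh_eq_prod, prod_ite, prod_const_one,
      mul_one, prod_const, hammingNorm]
  have sum_term (i : ι) : ∑ a, term i a = if x i ≠ 0 then 1 - X else 1 + X := by
    have sum_eq (g : ZMod 2 → ℤ[X]) : ∑ a, g a = g 0 + g 1 := Fin.sum_univ_two g
    have : x i = 0 ∨ x i = 1 := by generalize x i = a; revert a; decide
    rcases this with h | h <;> simp [term, h, sum_eq, sub_eq_add_neg]
  have card_support : #{i | ¬ x i ≠ 0} = Fintype.card ι - hammingNorm x := by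
    rw [filter_not, card_sdiff_of_subset (filter_subset _ _), card_univ, hammingNorm]
  calc ∑ u, Polynomial.C (walsh u x) * X ^ hammingNorm u
      = ∏ i, ∑ a, term i a := by
        rw [prod_univ_sum, Fintype.piFinset_univ, sum_congr rfl fun u _ ↦ prod_term u]
    _ = _ := by
        simp only [sum_term, prod_ite, prod_const, card_support]
        rfl

lemma sum_walsh_eq_krawtchouk (k : ℕ) (x : ι → ZMod 2) :
    ∑ u with hammingNorm u = k, walsh u x = krawtchouk (Fintype.card ι) k (hammingNorm x) := by
  rw [krawtchouk_eq_coeff, ← sum_walsh_mul_X_pow, finsetSum_coeff, sum_filter]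
  simp only [coeff_C_mul_X_pow, eq_comm]

lemma sum_walsh_mul_walsh (k : ℕ) (x y : ι → ZMod 2) :
    ∑ u with hammingNorm u = k, walsh u x * walsh u y =
      krawtchouk (Fintype.card ι) k (hammingDist x y) := by
  simp only [← walsh_add_right, sum_walsh_eq_krawtchouk, hammingDist_eq_hammingNorm_add]

end Krawtchouk

section Delsarte

variable {ι : Type*} [Fintype ι] [DecidableEq ι]

/-- The dual distance distribution of `C`, without the usual normalization by `|C| ^ 2`. -/
def dualDistribution (C : Finset (ι → ZMod 2)) (k : ℕ) : ℤ :=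
  ∑ u with hammingNorm u = k, (∑ c ∈ C, walsh u c) ^ 2

lemma dualDistribution_nonneg (C : Finset (ι → ZMod 2)) (k : ℕ) : 0 ≤ dualDistribution C k :=
  sum_nonneg fun _ _ ↦ sq_nonneg _

lemma dualDistribution_zero (C : Finset (ι → ZMod 2)) : dualDistribution C 0 = (#C : ℤ) ^ 2 := by
  simp [dualDistribution, hammingNorm_eq_zero, filter_eq']

lemma dualDistribution_eq_zero_iff {C : Finset (ι → ZMod 2)} {k : ℕ} :
    dualDistribution C k = 0 ↔ ∀ u, hammingNorm u = k → ∑ c ∈ C, walsh u c = 0 := by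
  simp [dualDistribution, sum_eq_zero_iff_of_nonneg, sq_nonneg]

lemma sum_sum_krawtchouk (C : Finset (ι → ZMod 2)) (k : ℕ) :
    ∑ x ∈ C, ∑ y ∈ C, krawtchouk (Fintype.card ι) k (hammingDist x y) = dualDistribution C k := by
  simp only [← sum_walsh_mul_walsh, dualDistribution, sq, sum_mul_sum]
  rw [sum_comm (s := {u | hammingNorm u = k})]
  exact sum_congr rfl fun _ _ ↦ sum_comm.symm

/-- The function `w ↦ ∑ k ≤ n, f k * K_k(w)` with Krawtchouk coefficients `f`. -/
def krawtchoukSeries (n : ℕ) (f : ℕ → ℤ) (w : ℕ) : ℤ :=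
  ∑ k ∈ range (n + 1), f k * krawtchouk n k w

lemma sum_sum_krawtchoukSeries (C : Finset (ι → ZMod 2)) (f : ℕ → ℤ) :
    ∑ x ∈ C, ∑ y ∈ C, krawtchoukSeries (Fintype.card ι) f (hammingDist x y) =
      ∑ k ∈ range (Fintype.card ι + 1), f k * dualDistribution C k := by
  simp only [krawtchoukSeries, ← sum_sum_krawtchouk, mul_sum]
  rw [sum_comm (s := range _)]
  exact sum_congr rfl fun _ _ ↦ sum_comm.symm

theorem delsarte_eq_zero_of_tight {C : Finset (ι → ZMod 2)} {f : ℕ → ℤ} (hf : ∀ k, 0 ≤ f k)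
    (hneg : ∀ x ∈ C, ∀ y ∈ C, x ≠ y → krawtchoukSeries (Fintype.card ι) f (hammingDist x y) ≤ 0)
    (htight : krawtchoukSeries (Fintype.card ι) f 0 = f 0 * #C) :
    (∀ x ∈ C, ∀ y ∈ C, x ≠ y → krawtchoukSeries (Fintype.card ι) f (hammingDist x y) = 0) ∧
      ∀ k ≠ 0, k ≤ Fintype.card ι → f k * dualDistribution C k = 0 := by
  set n := Fintype.card ι
  have split_diag : ∑ x ∈ C, ∑ y ∈ C, krawtchoukSeries n f (hammingDist x y) =
      f 0 * #C ^ 2 + ∑ p ∈ C.offDiag, krawtchoukSeries n f (hammingDist p.1 p.2) := by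
    rw [← sum_product', ← diag_union_offDiag, sum_union (disjoint_diag_offDiag C), sum_diag]
    simp only [hammingDist_self, htight, sum_const, nsmul_eq_mul]
    ring
  have split_zero : ∑ k ∈ range (n + 1), f k * dualDistribution C k =
      f 0 * #C ^ 2 + ∑ k ∈ range n, f (k + 1) * dualDistribution C (k + 1) := by
    rw [sum_range_succ', dualDistribution_zero, add_comm]
  have offDiag_nonpos : ∀ p ∈ C.offDiag, krawtchoukSeries n f (hammingDist p.1 p.2) ≤ 0 := by
    simpa [Finset.mem_offDiag, and_imp] using fun x y hx hy ↦ hneg x hx y hy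
  have dual_nonneg : ∀ k ∈ range n, 0 ≤ f (k + 1) * dualDistribution C (k + 1) :=
    fun k _ ↦ mul_nonneg (hf _) (dualDistribution_nonneg C _)
  have sums_eq := sum_sum_krawtchoukSeries C f
  have offDiag_sum_le := sum_nonpos offDiag_nonpos
  have dual_sum_ge := sum_nonneg dual_nonneg
  constructor
  · intro x hx y hy hxy
    exact (sum_eq_zero_iff_of_nonpos offDiag_nonpos).1 (by linarith) (x, y)
      (Finset.mem_offDiag.2 ⟨hx, hy, hxy⟩)
  · intro k hk hkn
    obtain ⟨k, rfl⟩ := Nat.exists_eq_succ_of_ne_zero hk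
    exact (sum_eq_zero_iff_of_nonneg dual_nonneg).1 (by linarith) k (Finset.mem_range.2 (by omega))

end Delsarte

section Strength

variable {ι : Type*} [Fintype ι]

/-- `C` is an orthogonal array of strength `t`, in Fourier form: every nontrivial character of
weight at most `t` sums to zero over `C`. -/
def HasStrength (C : Finset (ι → ZMod 2)) (t : ℕ) : Prop :=
  ∀ u : ι → ZMod 2, u ≠ 0 → hammingNorm u ≤ t → ∑ c ∈ C, walsh u c = 0

lemma hammingNorm_add_le (u v : ι → ZMod 2) :
    hammingNorm (u + v) ≤ hammingNorm u + hammingNorm v := by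
  have := hammingNorm_add_add_two_mul u v
  omega

variable {C : Finset (ι → ZMod 2)}

lemma HasStrength.mono {s t : ℕ} (hC : HasStrength C t) (hst : s ≤ t) : HasStrength C s :=
  fun u hu hus ↦ hC u hu (hus.trans hst)

lemma HasStrength.sum_walsh_mul_walsh {j k : ℕ} (hC : HasStrength C (j + k)) {u v : ι → ZMod 2}
    (hu : hammingNorm u = j) (hv : hammingNorm v = k) :
    ∑ c ∈ C, walsh u c * walsh v c = if u = v then (#C : ℤ) else 0 := by
  simp only [← walsh_add_left]
  split_ifs with huv
  · simp [huv, ZModModule.add_self]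
  · refine hC _ (fun h ↦ huv ?_) (hu ▸ hv ▸ hammingNorm_add_le u v)
    rwa [← ZModModule.sub_eq_add, sub_eq_zero] at h

lemma HasStrength.sum_krawtchouk_mul {j k : ℕ} (hC : HasStrength C (j + k)) (x y : ι → ZMod 2) :
    ∑ c ∈ C, krawtchouk (Fintype.card ι) j (hammingDist c x) *
        krawtchouk (Fintype.card ι) k (hammingDist c y) =
      if j = k then #C * krawtchouk (Fintype.card ι) k (hammingDist x y) else 0 := by
  classical
  have expand (c : ι → ZMod 2) : krawtchouk (Fintype.card ι) j (hammingDist c x) *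
      krawtchouk (Fintype.card ι) k (hammingDist c y) =
      ∑ u with hammingNorm u = j, ∑ v with hammingNorm v = k,
        walsh u x * walsh v y * (walsh u c * walsh v c) := by
    rw [← BinaryCode.sum_walsh_mul_walsh, ← BinaryCode.sum_walsh_mul_walsh, sum_mul_sum]
    exact sum_congr rfl fun u _ ↦ sum_congr rfl fun v _ ↦ by ring
  calc _ = ∑ u with hammingNorm u = j, ∑ v with hammingNorm v = k,
        walsh u x * walsh v y * ∑ c ∈ C, walsh u c * walsh v c := by
        simp only [expand, mul_sum]
        rw [sum_comm]
        exact sum_congr rfl fun _ _ ↦ sum_comm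
    _ = ∑ u with hammingNorm u = j, ∑ v with hammingNorm v = k,
        if u = v then walsh u x * walsh u y * #C else 0 := by
        refine sum_congr rfl fun u hu ↦ sum_congr rfl fun v hv ↦ ?_
        rw [hC.sum_walsh_mul_walsh (mem_filter.1 hu).2 (mem_filter.1 hv).2]
        split_ifs with huv <;> simp [huv]
    _ = if j = k then #C * krawtchouk (Fintype.card ι) k (hammingDist x y) else 0 := by
        simp only [sum_ite_eq, mem_filter_univ]
        split_ifs with hjk
        · subst hjk
          rw [← BinaryCode.sum_walsh_mul_walsh, mul_sum]
          refine sum_congr rfl fun u hu ↦ ?_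
          rw [if_pos (mem_filter.1 hu).2, mul_comm]
        · refine sum_eq_zero fun u hu ↦ if_neg ?_
          rwa [(mem_filter.1 hu).2]

lemma HasStrength.sum_krawtchouk {k : ℕ} (hC : HasStrength C k) (hk : k ≠ 0) (x : ι → ZMod 2) :
    ∑ c ∈ C, krawtchouk (Fintype.card ι) k (hammingDist c x) = 0 := by
  have hC' : HasStrength C (k + 0) := hC
  simpa [hk] using hC'.sum_krawtchouk_mul x x

end Strength

section TranslationKernel

variable {M : Type*} [AddCommGroup M]

open scoped Pointwise in
/-- The kernel of a code: the subspace of vectors whose translations fix the code setwise. -/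
def translationKernel (n : ℕ) [Module (ZMod n) M] (C : Set M) :
    Submodule (ZMod n) M :=
  AddSubgroup.toZModSubmodule n (AddAction.stabilizer M C)

variable {n : ℕ} [Module (ZMod n) M]

lemma coe_translationKernel (C : Set M) :
    (translationKernel n C : Set M) = {v | (fun c ↦ v + c) '' C = C} :=
  rfl

lemma mem_translationKernel_of_finite {C : Set M} (hC : C.Finite) {v : M} :
    v ∈ translationKernel n C ↔ ∀ c ∈ C, v + c ∈ C :=
  AddAction.mem_stabilizer_set' hC

end TranslationKernel

section NordstromRobinson

/-- `C` has the parameters of the Nordstrom-Robinson code: length `16`, size `256` and minimum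
distance at least `6`. -/
structure IsNordstromRobinson (C : Finset (Fin 16 → ZMod 2)) : Prop where
  card_eq : #C = 256
  six_le_hammingDist : ∀ x ∈ C, ∀ y ∈ C, x ≠ y → 6 ≤ hammingDist x y

/-- The codewords of `C` whose distance to `y` is a multiple of four. When `C` is
`IsNordstromRobinson`, these are the classes of an equivalence relation on `C`. -/
def doublyEvenClass {ι : Type*} [Fintype ι] (C : Finset (ι → ZMod 2)) (y : ι → ZMod 2) :
    Finset (ι → ZMod 2) :=
  {c ∈ C | 4 ∣ hammingDist c y}

lemma mem_doublyEvenClass {ι : Type*} [Fintype ι] {C : Finset (ι → ZMod 2)} {y c : ι → ZMod 2} :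
    c ∈ doublyEvenClass C y ↔ c ∈ C ∧ 4 ∣ hammingDist c y :=
  mem_filter

/-- Krawtchouk coefficients of the function equal to `4/3 * (w - 6) * (w - 8) * (w - 10) * (w - 16)`
at even `w`, from which `2 * K_3(w) + 2 * K_4(w)` is subtracted at odd `w`: since
`K_{16-k}(w) = (-1) ^ w * K_k(w)`, this amounts to moving mass from `K_3`, `K_4` to `K_13`, `K_12`,
and it makes the value at every odd `w ≥ 6` negative. -/
def lpCertificate : ℕ → ℤ
  | 0 => 40
  | 1 => 40
  | 2 => 12
  | 3 => 7
  | 4 => 1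
  | 12 => 1
  | 13 => 1
  | _ => 0

lemma lpCertificate_nonneg (k : ℕ) : 0 ≤ lpCertificate k := by
  unfold lpCertificate
  split <;> norm_num

lemma krawtchoukSeries_lpCertificate_zero :
    krawtchoukSeries 16 lpCertificate 0 = lpCertificate 0 * 256 := by
  decide +kernel

lemma krawtchoukSeries_lpCertificate_nonpos :
    ∀ w ∈ Finset.Icc 6 16, krawtchoukSeries 16 lpCertificate w ≤ 0 := by
  decide +kernel

lemma mem_of_krawtchoukSeries_lpCertificate_eq_zero : ∀ w ∈ Finset.Icc 6 16,
    krawtchoukSeries 16 lpCertificate w = 0 → w ∈ ({6, 8, 10, 16} : Finset ℕ) := by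
  decide +kernel

lemma krawtchouk_two_of_mem : ∀ w ∈ ({0, 6, 8, 10, 16} : Finset ℕ), krawtchouk 16 2 w =
    128 * (if w = 0 ∨ w = 16 then 1 else 0) - 8 * if 4 ∣ w then 1 else 0 := by
  decide +kernel

lemma krawtchouk_two_sub : ∀ w ∈ Finset.range 17, krawtchouk 16 2 (16 - w) = krawtchouk 16 2 w := by
  decide +kernel

lemma indicator_four_dvd_eq_krawtchouk : ∀ w ∈ ({0, 6, 8, 10, 16} : Finset ℕ),
    20 - 14 * krawtchouk 16 2 w + krawtchouk 16 4 w = 160 * if 4 ∣ w then 1 else 0 := by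
  decide +kernel

lemma krawtchouk_le_indicator_of_even : ∀ w ∈ Finset.range 17, Even w →
    20 - 6 * krawtchouk 16 2 w + krawtchouk 16 4 w ≤
      1024 * (if w = 0 ∨ w = 16 then 1 else 0) + 96 * if 4 ∣ w then 1 else 0 := by
  decide +kernel

lemma hammingDist_mem_range (x y : Fin 16 → ZMod 2) : hammingDist x y ∈ Finset.range 17 :=
  Finset.mem_range.2 (Nat.lt_succ_of_le (by simpa using hammingDist_le_card_fintype (x := x)))

lemma hammingDist_eq_sixteen_iff {x y : Fin 16 → ZMod 2} : hammingDist x y = 16 ↔ x = y + 1 :=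
  hammingDist_eq_card_iff

namespace IsNordstromRobinson

variable {C : Finset (Fin 16 → ZMod 2)} {c r v x y z : Fin 16 → ZMod 2}

lemma hammingDist_mem_Icc (hC : IsNordstromRobinson C) (hx : x ∈ C) (hy : y ∈ C) (hxy : x ≠ y) :
    hammingDist x y ∈ Finset.Icc 6 16 :=
  Finset.mem_Icc.2 ⟨hC.six_le_hammingDist x hx y hy hxy,
    Nat.lt_succ_iff.1 (Finset.mem_range.1 (hammingDist_mem_range x y))⟩

lemma delsarte_tight (hC : IsNordstromRobinson C) :
    (∀ x ∈ C, ∀ y ∈ C, x ≠ y → krawtchoukSeries 16 lpCertificate (hammingDist x y) = 0) ∧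
      ∀ k ≠ 0, k ≤ 16 → lpCertificate k * dualDistribution C k = 0 := by
  have htight : krawtchoukSeries 16 lpCertificate 0 = lpCertificate 0 * #C := by
    rw [hC.card_eq]
    exact krawtchoukSeries_lpCertificate_zero
  have hneg : ∀ x ∈ C, ∀ y ∈ C, x ≠ y →
      krawtchoukSeries 16 lpCertificate (hammingDist x y) ≤ 0 := fun x hx y hy hxy ↦
    krawtchoukSeries_lpCertificate_nonpos _ (hC.hammingDist_mem_Icc hx hy hxy)
  simpa only [Fintype.card_fin] using delsarte_eq_zero_of_tight (ι := Fin 16) lpCertificate_nonneg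
    (by simpa only [Fintype.card_fin] using hneg) (by simpa only [Fintype.card_fin] using htight)

lemma hammingDist_mem (hC : IsNordstromRobinson C) (hx : x ∈ C) (hy : y ∈ C) :
    hammingDist x y ∈ ({0, 6, 8, 10, 16} : Finset ℕ) := by
  by_cases hxy : x = y
  · simp [hxy]
  · exact Finset.mem_insert_of_mem <| mem_of_krawtchoukSeries_lpCertificate_eq_zero _
      (hC.hammingDist_mem_Icc hx hy hxy) (hC.delsarte_tight.1 x hx y hy hxy)

lemma hasStrength_four (hC : IsNordstromRobinson C) : HasStrength C 4 := by
  intro u hu hu4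
  have hu0 : hammingNorm u ≠ 0 := hammingNorm_ne_zero_iff.2 hu
  have coeff_ne_zero : lpCertificate (hammingNorm u) ≠ 0 := by
    interval_cases hammingNorm u <;> simp_all [lpCertificate]
  have dual_eq_zero := (mul_eq_zero.1 <| hC.delsarte_tight.2 _ hu0 (by omega)).resolve_left
    coeff_ne_zero
  exact dualDistribution_eq_zero_iff.1 dual_eq_zero u rfl

lemma even_hammingDist (hC : IsNordstromRobinson C) (hx : x ∈ C) (hy : y ∈ C) :
    Even (hammingDist x y) := by
  have key : ∀ w ∈ ({0, 6, 8, 10, 16} : Finset ℕ), Even w := by decide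
  exact key _ (hC.hammingDist_mem hx hy)

lemma sum_krawtchouk_two_four (hC : IsNordstromRobinson C) (a b e : ℤ) (z : Fin 16 → ZMod 2) :
    ∑ c ∈ C, (a + b * krawtchouk 16 2 (hammingDist c z) +
      e * krawtchouk 16 4 (hammingDist c z)) = 256 * a := by
  have sum_two := (hC.hasStrength_four.mono (by norm_num : 2 ≤ 4)).sum_krawtchouk two_ne_zero z
  have sum_four := hC.hasStrength_four.sum_krawtchouk four_ne_zero z
  rw [Fintype.card_fin] at sum_two sum_four
  simp [sum_add_distrib, ← mul_sum, sum_two, sum_four, hC.card_eq]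

lemma card_doublyEvenClass (hC : IsNordstromRobinson C) (hy : y ∈ C) :
    #(doublyEvenClass C y) = 32 := by
  have key : 160 * (#(doublyEvenClass C y) : ℤ) = 256 * 20 := by
    rw [← hC.sum_krawtchouk_two_four 20 (-14) 1 y, doublyEvenClass, Finset.card_filter,
      Nat.cast_sum, mul_sum]
    refine sum_congr rfl fun c hc ↦ ?_
    have := indicator_four_dvd_eq_krawtchouk _ (hC.hammingDist_mem hc hy)
    push_cast
    linarith
  omega

-- The quadrature rule of strength four sees at least two codewords in `{z, z + 1}`.
lemma mem_and_add_one_mem_of_card_doublyEvenClass_le (hC : IsNordstromRobinson C)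
    (heven : ∀ c ∈ C, Even (hammingDist c z)) (hcard : #(doublyEvenClass C z) ≤ 32) :
    z ∈ C ∧ z + 1 ∈ C := by
  have quadrature : (256 * 20 : ℤ) ≤
      1024 * #{c ∈ C | hammingDist c z = 0 ∨ hammingDist c z = 16} +
        96 * #(doublyEvenClass C z) := by
    rw [← hC.sum_krawtchouk_two_four 20 (-6) 1 z, doublyEvenClass, Finset.card_filter,
      Finset.card_filter, Nat.cast_sum, Nat.cast_sum, mul_sum, mul_sum, ← sum_add_distrib]
    refine sum_le_sum fun c hc ↦ ?_
    have := krawtchouk_le_indicator_of_even _ (hammingDist_mem_range c z) (heven c hc)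
    push_cast
    linarith
  have eq_pair : C.filter (fun c ↦ hammingDist c z = 0 ∨ hammingDist c z = 16) = {z, z + 1} := by
    refine Finset.eq_of_subset_of_card_le (fun c hc ↦ ?_) (Finset.card_le_two.trans (by omega))
    simpa [hammingDist_eq_sixteen_iff] using (mem_filter.1 hc).2
  have subset_C := eq_pair ▸ filter_subset _ C
  exact ⟨subset_C (by simp), subset_C (by simp)⟩

lemma add_one_mem (hC : IsNordstromRobinson C) (hy : y ∈ C) : y + 1 ∈ C :=
  (hC.mem_and_add_one_mem_of_card_doublyEvenClass_le (fun _ hc ↦ hC.even_hammingDist hc hy)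
    (hC.card_doublyEvenClass hy).le).2

lemma pair_add_one_subset (hC : IsNordstromRobinson C) (hy : y ∈ C) : {y, y + 1} ⊆ C := by
  simp [Finset.insert_subset_iff, hy, hC.add_one_mem hy]

lemma sum_krawtchouk_two_mul (hC : IsNordstromRobinson C) {D : Finset (Fin 16 → ZMod 2)}
    (hD : D ⊆ C) (hx : x ∈ C) (hpair : {x, x + 1} ⊆ D) (g : (Fin 16 → ZMod 2) → ℤ) :
    ∑ c ∈ D, krawtchouk 16 2 (hammingDist c x) * g c =
      128 * (g x + g (x + 1)) - 8 * ∑ c ∈ doublyEvenClass D x, g c := by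
  have pair_eq : D.filter (fun c ↦ hammingDist c x = 0 ∨ hammingDist c x = 16) = {x, x + 1} := by
    ext c
    simp only [mem_filter, hammingDist_eq_zero, hammingDist_eq_sixteen_iff, Finset.mem_insert,
      Finset.mem_singleton, and_iff_right_iff_imp]
    exact fun hc ↦ hpair (by simpa using hc)
  have ne_add_one : x ≠ x + 1 := by simp
  rw [← sum_pair ne_add_one, ← pair_eq, doublyEvenClass, sum_filter, sum_filter, mul_sum, mul_sum,
    ← sum_sub_distrib]
  refine sum_congr rfl fun c hc ↦ ?_
  rw [krawtchouk_two_of_mem _ (hC.hammingDist_mem (hD hc) hx)]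
  split_ifs <;> ring

-- Evaluate `∑ c ∈ C, K_2(d(c, x)) * K_2(d(c, z)) = 256 * K_2(d(x, z))` through the values of `K_2`.
lemma sum_doublyEvenClass_krawtchouk_two (hC : IsNordstromRobinson C) (hx : x ∈ C)
    (z : Fin 16 → ZMod 2) :
    ∑ c ∈ doublyEvenClass C x, krawtchouk 16 2 (hammingDist c z) = 0 := by
  have orthogonality := HasStrength.sum_krawtchouk_mul (j := 2) (k := 2) hC.hasStrength_four x z
  rw [Fintype.card_fin, hC.sum_krawtchouk_two_mul Finset.Subset.rfl hx (hC.pair_add_one_subset hx),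
    hammingDist_add_one_left, Fintype.card_fin, krawtchouk_two_sub _ (hammingDist_mem_range x z),
    hC.card_eq] at orthogonality
  push_cast at orthogonality
  linarith

lemma four_dvd_hammingDist_of_mem (hC : IsNordstromRobinson C) (hx : x ∈ C)
    (hy : y ∈ doublyEvenClass C x) (hc : c ∈ doublyEvenClass C x) : 4 ∣ hammingDist c y := by
  obtain ⟨hyC, hyx⟩ := mem_doublyEvenClass.1 hy
  have pair_subset_class : {y, y + 1} ⊆ doublyEvenClass C x := by
    have : 4 ∣ hammingDist (y + 1) x := by
      rw [hammingDist_add_one_left, Fintype.card_fin]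
      omega
    simp [Finset.insert_subset_iff, mem_doublyEvenClass, hyC, hyx, hC.add_one_mem hyC, this]
  have card_eq : #(doublyEvenClass (doublyEvenClass C x) y) = #(doublyEvenClass C x) := by
    have := hC.sum_krawtchouk_two_mul (D := doublyEvenClass C x) (filter_subset _ C) hyC
      pair_subset_class 1
    simp only [Pi.one_apply, mul_one, hC.sum_doublyEvenClass_krawtchouk_two hx, sum_const,
      nsmul_eq_mul] at this
    rw [hC.card_doublyEvenClass hx]
    omega
  exact card_filter_eq_iff.1 card_eq c hc

lemma dotProduct_eq_zero_of_mem (hC : IsNordstromRobinson C) (h0 : 0 ∈ C)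
    (hr : r ∈ doublyEvenClass C 0) (hc : c ∈ C) : r ⬝ᵥ c = 0 := by
  obtain ⟨hrC, hr4⟩ := mem_doublyEvenClass.1 hr
  have zero_mem : 0 ∈ doublyEvenClass C r := by
    simpa [mem_doublyEvenClass, h0, hammingDist_comm] using hr4
  have four_dvd_iff : 4 ∣ hammingDist c r ↔ 4 ∣ hammingDist c 0 :=
    ⟨fun h ↦ hC.four_dvd_hammingDist_of_mem hrC zero_mem (mem_doublyEvenClass.2 ⟨hc, h⟩),
      fun h ↦ hC.four_dvd_hammingDist_of_mem h0 hr (mem_doublyEvenClass.2 ⟨hc, h⟩)⟩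
  obtain ⟨a, ha⟩ := hC.even_hammingDist hc hrC
  obtain ⟨b, hb⟩ := hC.even_hammingDist hc h0
  rw [hammingDist_zero_right] at hr4 hb four_dvd_iff
  rw [dotProduct_eq_zero_iff_modEq, ← hammingDist_eq_hammingNorm_add, hammingDist_comm, Nat.ModEq]
  omega

lemma add_mem_of_mem (hC : IsNordstromRobinson C) (h0 : 0 ∈ C) (hr : r ∈ doublyEvenClass C 0)
    (hc : c ∈ C) : r + c ∈ C := by
  have four_dvd_norm : 4 ∣ hammingNorm r := by simpa using (mem_doublyEvenClass.1 hr).2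
  have modEq (d) (hd : d ∈ C) : hammingDist d (r + c) ≡ hammingDist d c [MOD 4] := by
    have orthogonal : r ⬝ᵥ (d + c) = 0 := by
      rw [dotProduct_add, hC.dotProduct_eq_zero_of_mem h0 hr hd,
        hC.dotProduct_eq_zero_of_mem h0 hr hc, add_zero]
    rw [hammingDist_eq_hammingNorm_add, hammingDist_eq_hammingNorm_add, add_left_comm]
    refine ((dotProduct_eq_zero_iff_modEq _ _).1 orthogonal).trans ?_
    rw [Nat.ModEq]
    omega
  have class_eq : doublyEvenClass C (r + c) = doublyEvenClass C c :=
    filter_congr fun d hd ↦ (modEq d hd).dvd_iff dvd_rfl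
  refine (hC.mem_and_add_one_mem_of_card_doublyEvenClass_le (fun d hd ↦ ?_)
    (class_eq ▸ hC.card_doublyEvenClass hc).le).1
  exact even_iff_two_dvd.2 <| ((modEq d hd).dvd_iff (by norm_num)).2
    (hC.even_hammingDist hd hc).two_dvd

lemma exists_forall_not_four_dvd (hC : IsNordstromRobinson C) {T : Finset (Fin 16 → ZMod 2)}
    (hT : T ⊆ C) (hT8 : #T < 8) : ∃ c ∈ C, ∀ t ∈ T, ¬ 4 ∣ hammingDist c t := by
  by_contra! h
  have subset_biUnion : C ⊆ T.biUnion (doublyEvenClass C) := fun c hc ↦ by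
    obtain ⟨t, ht, hct⟩ := h c hc
    exact mem_biUnion.2 ⟨t, ht, mem_doublyEvenClass.2 ⟨hc, hct⟩⟩
  have card_le := (Finset.card_le_card subset_biUnion).trans
    (card_biUnion_le_card_mul T _ 32 fun t ht ↦ (hC.card_doublyEvenClass (hT ht)).le)
  rw [hC.card_eq] at card_le
  omega

lemma dotProduct_eq_one_of_not_four_dvd (hC : IsNordstromRobinson C) (h0 : 0 ∈ C) (hx : x ∈ C)
    (hy : y ∈ C) (hx4 : ¬ 4 ∣ hammingDist x 0) (hy4 : ¬ 4 ∣ hammingDist y 0)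
    (hxy4 : ¬ 4 ∣ hammingDist x y) : x ⬝ᵥ y = 1 := by
  obtain ⟨a, ha⟩ := hC.even_hammingDist hx h0
  obtain ⟨b, hb⟩ := hC.even_hammingDist hy h0
  obtain ⟨d, hd⟩ := hC.even_hammingDist hx hy
  refine Fin.eq_one_of_ne_zero (x ⬝ᵥ y) fun (h : x ⬝ᵥ y = 0) ↦ ?_
  rw [dotProduct_eq_zero_iff_modEq, ← hammingDist_eq_hammingNorm_add, Nat.ModEq,
    ← hammingDist_zero_right, ← hammingDist_zero_right] at h
  omega

lemma four_dvd_of_forall_add_mem (hC : IsNordstromRobinson C) (h0 : 0 ∈ C)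
    (hv : ∀ c ∈ C, v + c ∈ C) : 4 ∣ hammingDist v 0 := by
  by_contra hv4
  have hvC : v ∈ C := by simpa using hv 0 h0
  obtain ⟨c, hc, hcT⟩ := hC.exists_forall_not_four_dvd (T := {0, v})
    (by simp [Finset.insert_subset_iff, h0, hvC]) (Finset.card_le_two.trans_lt (by norm_num))
  obtain ⟨d, hd, hdT⟩ := hC.exists_forall_not_four_dvd (T := {0, v, c, v + c})
    (by simp [Finset.insert_subset_iff, h0, hvC, hc, hv c hc])
    (Finset.card_le_four.trans_lt (by norm_num))
  simp only [Finset.mem_insert, Finset.mem_singleton, forall_eq_or_imp, forall_eq] at hcT hdT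
  obtain ⟨hc0, hcv⟩ := hcT
  obtain ⟨hd0, hdv, hdc, hdvc⟩ := hdT
  have hvc0 : ¬ 4 ∣ hammingDist (v + c) 0 := by
    rwa [hammingDist_zero_right, add_comm, ← hammingDist_eq_hammingNorm_add]
  have dot_v := hC.dotProduct_eq_one_of_not_four_dvd h0 hd hvC hd0 hv4 hdv
  have dot_c := hC.dotProduct_eq_one_of_not_four_dvd h0 hd hc hd0 hc0 hdc
  have dot_add := hC.dotProduct_eq_one_of_not_four_dvd h0 hd (hv c hc) hd0 hvc0 hdvc
  rw [dotProduct_add, dot_v, dot_c] at dot_add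
  exact absurd dot_add (by decide)

theorem coe_translationKernel_eq_doublyEvenClass (hC : IsNordstromRobinson C) (h0 : 0 ∈ C) :
    (translationKernel 2 (C : Set (Fin 16 → ZMod 2)) : Set (Fin 16 → ZMod 2)) =
      doublyEvenClass C 0 := by
  ext v
  simp only [SetLike.mem_coe, mem_translationKernel_of_finite C.finite_toSet]
  refine ⟨fun hv ↦ mem_doublyEvenClass.2 ⟨?_, hC.four_dvd_of_forall_add_mem h0 hv⟩,
    fun hv c hc ↦ hC.add_mem_of_mem h0 hv hc⟩
  simpa using hv 0 h0

lemma hammingNorm_of_mem_doublyEvenClass (hC : IsNordstromRobinson C) (h0 : 0 ∈ C)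
    (hv : v ∈ doublyEvenClass C 0) (hv0 : v ≠ 0) : hammingNorm v = 8 ∨ hammingNorm v = 16 := by
  obtain ⟨hvC, hv4⟩ := mem_doublyEvenClass.1 hv
  have norm_ne_zero := hammingNorm_ne_zero_iff.2 hv0
  have norm_mem := hC.hammingDist_mem hvC h0
  simp only [hammingDist_zero_right, Finset.mem_insert, Finset.mem_singleton] at hv4 norm_mem
  omega

end IsNordstromRobinson

end NordstromRobinson

end BinaryCode

/-- For a binary `(16, 256, 6)` code `C` containing `0`, the set of translations
fixing `C` setwise forms a 32-element linear subspace `K ⊆ C` all of whose nonzero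
vectors have weight 8 or 16 (for the Nordstrom-Robinson code, `K` is `R(1,4)`). -/
theorem stmt_12 (C : Set (Fin 16 → ZMod 2)) (h0 : (0 : Fin 16 → ZMod 2) ∈ C)
    (hcard : C.ncard = 256) (hd : IsMinDist C 6) :
    ∃ K : Submodule (ZMod 2) (Fin 16 → ZMod 2),
      (K : Set (Fin 16 → ZMod 2)) =
        {v : Fin 16 → ZMod 2 | (fun c => v + c) '' C = C} ∧
      (K : Set (Fin 16 → ZMod 2)) ⊆ C ∧
      (K : Set (Fin 16 → ZMod 2)).ncard = 32 ∧
      ∀ v ∈ K, v ≠ 0 → hammingNorm v = 8 ∨ hammingNorm v = 16 := by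
  lift C to Finset (Fin 16 → ZMod 2) using Set.finite_of_ncard_pos (by omega)
  have hC : BinaryCode.IsNordstromRobinson C := ⟨by rwa [Set.ncard_coe_finset] at hcard, hd.1⟩
  have kernel_eq := hC.coe_translationKernel_eq_doublyEvenClass h0
  refine ⟨BinaryCode.translationKernel 2 C, BinaryCode.coe_translationKernel _, ?_, ?_, ?_⟩
  · exact kernel_eq ▸ Finset.filter_subset _ C
  · rw [kernel_eq, Set.ncard_coe_finset, hC.card_doublyEvenClass h0]
  · intro v hv hv0
    rw [← SetLike.mem_coe, kernel_eq] at hv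
    exact hC.hammingNorm_of_mem_doublyEvenClass h0 hv hv0
end

section
/- Let C be a binary code of length 16 with exactly 256 codewords and minimum distance 6, let p be one of the 16 coordinates, and let C' ⊆ F_2^15 be the punctured code obtained by deleting coordinate p from every codeword of C. Then C' has exactly 256 codewords and minimum distance 5. -/
open Set

/-! Deleting one coordinate lowers Hamming distances by at most one, so puncturing keeps the number
of words and leaves minimum distance at least `5`. If it were at least `6`, puncturing once more
would give `256` words of length `14` at pairwise distance at least `5`, and the disjoint balls of
radius `2` about them would contain `256 * (1 + 14 + 91) > 2 ^ 14` points. -/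

/-- A code, over alphabets that may vary with the coordinate, whose minimum distance is at least
`d`. Codes with at most one word are separated by every `d`. -/
def HammingSeparated {ι : Type*} {β : ι → Type*} [Fintype ι] [∀ i, DecidableEq (β i)]
    (d : ℕ) (C : Set (∀ i, β i)) : Prop :=
  C.Pairwise fun x y => d ≤ hammingDist x y

section SpherePacking

variable {ι α : Type*} [Fintype ι] [DecidableEq ι] [Fintype α] [DecidableEq α]

/-- The closed ball of radius `t` about `c` for the Hamming distance, as a finset so that its points
can be counted. -/
def hammingBall (c : ι → α) (t : ℕ) : Finset (ι → α) := {x | hammingDist c x ≤ t}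

theorem mem_hammingBall {c x : ι → α} {t : ℕ} : x ∈ hammingBall c t ↔ hammingDist c x ≤ t :=
  Finset.mem_filter_univ x

theorem card_filter_ne_eq (c : ι → α) (s : Finset ι) :
    ({x | ({i | c i ≠ x i} : Finset ι) = s} : Finset (ι → α)).card =
      (Fintype.card α - 1) ^ s.card := by
  have filter_eq_piFinset : ({x | ({i | c i ≠ x i} : Finset ι) = s} : Finset (ι → α)) =
      Fintype.piFinset fun i => if i ∈ s then {c i}ᶜ else {c i} := by
    ext x
    simp only [Finset.mem_filter_univ, Fintype.mem_piFinset, Finset.ext_iff]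
    refine forall_congr' fun i => ?_
    by_cases hi : i ∈ s <;> simp [hi, eq_comm]
  rw [filter_eq_piFinset, Fintype.card_piFinset]
  simp only [apply_ite Finset.card, Finset.card_compl, Finset.card_singleton,
    Finset.prod_ite_mem, Finset.univ_inter, Finset.prod_const]

theorem card_filter_hammingDist_eq (c : ι → α) (k : ℕ) :
    ({x | hammingDist c x = k} : Finset (ι → α)).card =
      (Fintype.card ι).choose k * (Fintype.card α - 1) ^ k := by
  have mapsTo_powersetCard : Set.MapsTo (fun x : ι → α => ({i | c i ≠ x i} : Finset ι))
      ({x | hammingDist c x = k} : Finset (ι → α))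
      (Finset.powersetCard k (Finset.univ : Finset ι)) := fun x hx => by
    simpa [Finset.mem_powersetCard, hammingDist] using hx
  rw [Finset.card_eq_sum_card_fiberwise mapsTo_powersetCard, ← Finset.card_univ (α := ι),
    ← Finset.card_powersetCard, ← smul_eq_mul]
  refine Finset.sum_eq_card_nsmul fun s hs => ?_
  obtain ⟨-, rfl⟩ := Finset.mem_powersetCard.mp hs
  rw [← card_filter_ne_eq c s, Finset.filter_filter]
  exact congrArg Finset.card
    (Finset.filter_congr fun x _ => and_iff_right_of_imp (congrArg Finset.card))

theorem card_hammingBall (c : ι → α) (t : ℕ) :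
    (hammingBall c t).card =
      ∑ k ∈ Finset.range (t + 1), (Fintype.card ι).choose k * (Fintype.card α - 1) ^ k := by
  have mapsTo_range : Set.MapsTo (hammingDist c) (hammingBall c t) (Finset.range (t + 1)) :=
    fun x hx => Finset.mem_coe.mpr (Finset.mem_range_succ_iff.mpr (mem_hammingBall.mp hx))
  rw [Finset.card_eq_sum_card_fiberwise mapsTo_range]
  refine Finset.sum_congr rfl fun k hk => ?_
  rw [← card_filter_hammingDist_eq c k, hammingBall, Finset.filter_filter]
  exact congrArg Finset.card (Finset.filter_congr fun x _ =>
    and_iff_right_of_imp fun hx => hx.trans_le (Finset.mem_range_succ_iff.mp hk))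

theorem HammingSeparated.pairwiseDisjoint_hammingBall {d t : ℕ} {C : Set (ι → α)}
    (hC : HammingSeparated d C) (ht : 2 * t < d) :
    C.PairwiseDisjoint fun c => hammingBall c t := by
  refine fun c hc c' hc' hne => Finset.disjoint_left.mpr fun x hx hx' => ?_
  have hlt : hammingDist c c' < d := calc
    hammingDist c c' ≤ hammingDist c x + hammingDist c' x := hammingDist_triangle_right c c' x
    _ ≤ t + t := add_le_add (mem_hammingBall.mp hx) (mem_hammingBall.mp hx')
    _ < d := by omega
  exact hlt.not_ge (hC hc hc' hne)

end SpherePacking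

theorem HammingSeparated.hamming_bound {ι α : Type*} [Fintype ι] [Fintype α] [DecidableEq α]
    {d t : ℕ} {C : Set (ι → α)} (hC : HammingSeparated d C) (ht : 2 * t < d) :
    C.ncard * ∑ k ∈ Finset.range (t + 1), (Fintype.card ι).choose k * (Fintype.card α - 1) ^ k ≤
      Fintype.card α ^ Fintype.card ι := by
  classical
  have hdisj := hC.pairwiseDisjoint_hammingBall ht
  lift C to Finset (ι → α) using C.toFinite
  calc
    _ = ∑ c ∈ C, (hammingBall c t).card := by
      simp only [card_hammingBall, Finset.sum_const, smul_eq_mul, Set.ncard_coe_finset]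
    _ = (C.biUnion fun c => hammingBall c t).card := (Finset.card_biUnion hdisj).symm
    _ ≤ Fintype.card (ι → α) := Finset.card_le_univ _
    _ = Fintype.card α ^ Fintype.card ι := Fintype.card_fun

section Puncturing

variable {n : ℕ} {β : Fin (n + 1) → Type*} [∀ i, DecidableEq (β i)]

theorem hammingDist_le_hammingDist_removeNth_add_one (p : Fin (n + 1)) (x y : ∀ i, β i) :
    hammingDist x y ≤ hammingDist (p.removeNth x) (p.removeNth y) + 1 := by
  rw [hammingDist, hammingDist, Finset.card_filter, Finset.card_filter,
    Fin.sum_univ_succAbove _ p, add_comm]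
  gcongr
  · rfl
  · split_ifs <;> simp

theorem HammingSeparated.image_removeNth {d : ℕ} {C : Set (∀ i, β i)}
    (hC : HammingSeparated (d + 1) C) (p : Fin (n + 1)) :
    HammingSeparated d (p.removeNth '' C) := by
  rintro _ ⟨x, hx, rfl⟩ _ ⟨y, hy, rfl⟩ hne
  have hxy : d + 1 ≤ hammingDist x y := hC hx hy (ne_of_apply_ne _ hne)
  exact Nat.le_of_succ_le_succ (hxy.trans (hammingDist_le_hammingDist_removeNth_add_one p x y))

theorem HammingSeparated.ncard_image_removeNth {d : ℕ} {C : Set (∀ i, β i)}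
    (hC : HammingSeparated d C) (hd : 1 < d) (p : Fin (n + 1)) :
    (p.removeNth '' C).ncard = C.ncard := by
  refine Set.InjOn.ncard_image fun x hx y hy heq => by_contra fun hne => ?_
  have hxy : hammingDist x y ≤ 1 := by
    simpa only [heq, hammingDist_self] using hammingDist_le_hammingDist_removeNth_add_one p x y
  exact (hd.trans_le (hC hx hy hne)).not_ge hxy

end Puncturing

section MinimumDistance

variable {α : Type*} [Fintype α] [DecidableEq α] {n d t : ℕ}

theorem HammingSeparated.exists_hammingDist_eq {C : Set (Fin (n + 1) → α)}
    (hC : HammingSeparated d C) (ht : 2 * t < d)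
    (hcard : Fintype.card α ^ n <
      C.ncard * ∑ k ∈ Finset.range (t + 1), n.choose k * (Fintype.card α - 1) ^ k) :
    ∃ x ∈ C, ∃ y ∈ C, x ≠ y ∧ hammingDist x y = d := by
  by_contra! hne
  have hsucc : HammingSeparated (d + 1) C := fun x hx y hy hxy =>
    (hC hx hy hxy).lt_of_ne' (hne x hx y hy hxy)
  have hbound := (hsucc.image_removeNth 0).hamming_bound ht
  rw [hsucc.ncard_image_removeNth (by omega) 0, Fintype.card_fin] at hbound
  exact hcard.not_ge hbound

theorem stmt_13_general {C : Set (Fin (n + 2) → α)} (hC : HammingSeparated (d + 1) C)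
    (ht : 2 * t < d)
    (hcard : Fintype.card α ^ n <
      C.ncard * ∑ k ∈ Finset.range (t + 1), n.choose k * (Fintype.card α - 1) ^ k)
    (p : Fin (n + 2)) :
    (p.removeNth '' C).ncard = C.ncard ∧ HammingSeparated d (p.removeNth '' C) ∧
      ∃ x ∈ p.removeNth '' C, ∃ y ∈ p.removeNth '' C, x ≠ y ∧ hammingDist x y = d := by
  have hncard := hC.ncard_image_removeNth (by omega) p
  have hsep := hC.image_removeNth p
  exact ⟨hncard, hsep, hsep.exists_hammingDist_eq ht (by rwa [hncard])⟩

end MinimumDistance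

/-- Puncturing a binary `(16, 256, 6)` code at any coordinate yields a binary
`(15, 256, 5)` code. -/
theorem stmt_13 (C : Set (Fin 16 → ZMod 2)) (hcard : C.ncard = 256)
    (hd : IsMinDist C 6) (p : Fin 16) :
    ((fun α => α ∘ p.succAbove) '' C : Set (Fin 15 → ZMod 2)).ncard = 256 ∧
    IsMinDist ((fun α => α ∘ p.succAbove) '' C) 5 := by
  rw [← hcard]
  exact stmt_13_general (t := 2) hd.1 (by decide) (by rw [hcard, ZMod.card]; decide) p
end

section
/- Let C be a binary completely regular code of length 16 with minimum distance 6 containing the zero vector. Then the set C(6) of weight-6 codewords forms a 3-(16,6,4) design: for every 3-element subset T of the 16 coordinates, there are exactly 4 codewords of weight 6 whose support contains T. In particular |C(6)| = 112. -/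
open Set

/-!
Identify a binary word with its support, so that the code becomes a family `F` of subsets of the
coordinates and the Hamming distance becomes `#(X ∆ A)`. A set `T` of three points is at distance
three from `F`, and the members of `F` at distance three from `T` are `∅` and the `6`-sets
containing `T`. Complete regularity therefore makes the weight-six members a `3`-`(16, 6, μ)`
design, and `μ > 0` because the minimum distance is attained from every codeword. Counting over
pairs shows that `μ` is even. Since four points lie in at most one `6`-set of `F`, also
`3 * μ ≤ 13`, so `μ` is `2` or `4`.

Suppose `μ = 2` and let `Y` have four points. Comparing `Y` with smaller sets at the same distance
from `F` determines how many members of size `7` and `8` contain `Y`. If some `6`-set of `F`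
contains `Y`, no `7`-set and exactly two `8`-sets do. Otherwise no `7`-set does either, `Y` is at
distance four from `F`, and the number `n` of `8`-sets containing `Y` is the same for all such `Y`.
Averaging over the thirteen four-point extensions of a triple `T`, six of which lie in a `6`-set,
gives `5 * c = 2 * 6 + 7 * n` with `c` the number of `8`-sets containing `T`. But `n ≤ 3`: each
of the `9 + n` members at distance four from `Y` is at distance three from four neighbours of `Y`,
while each of the sixteen neighbours of `Y` is at distance three from at most `1 + μ = 3` members.
-/

namespace SetCode

open Finset
open scoped symmDiff

variable {α : Type*} [DecidableEq α] {F : Finset (Finset α)} {T X Y : Finset α}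
  {d e k t w δ μ r : ℕ}

/-- The number of members of `F` at Hamming distance `k` from `X`, sets being identified with their
indicator words. -/
def countAtDist (F : Finset (Finset α)) (X : Finset α) (k : ℕ) : ℕ :=
  #{A ∈ F | #(X ∆ A) = k}

/-- The number of members of `F` of weight `w` that contain `X`. -/
def coverCount (F : Finset (Finset α)) (w : ℕ) (X : Finset α) : ℕ :=
  #{A ∈ F | #A = w ∧ X ⊆ A}

/-- The number of members of `F` of weight `w` that contain all but exactly one point of `X`. -/
def nearCoverCount (F : Finset (Finset α)) (w : ℕ) (X : Finset α) : ℕ :=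
  #{A ∈ F | #A = w ∧ #(X \ A) = 1}

/-- The members of `F` of weight `w` form a `t`-`(v, w, μ)` design, `v` being the number of
points of `α`. -/
def IsDesign (F : Finset (Finset α)) (w t μ : ℕ) : Prop :=
  ∀ T : Finset α, #T = t → coverCount F w T = μ

/-- Distinct members of `F` are at Hamming distance at least `δ`. -/
def IsSeparated (F : Finset (Finset α)) (δ : ℕ) : Prop :=
  (F : Set (Finset α)).Pairwise fun A B => δ ≤ #(A ∆ B)

/-- The Hamming distance from `X` to the family `F` is `d`; false for every `d` if `F` is empty. -/
def IsAtDist (F : Finset (Finset α)) (X : Finset α) (d : ℕ) : Prop :=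
  IsLeast ((fun A => #(X ∆ A)) '' (F : Set (Finset α))) d

/-- Complete regularity of a code, transported to the family of supports of its words. -/
def IsCompletelyRegularFamily (F : Finset (Finset α)) : Prop :=
  ∀ ⦃X Y d⦄, IsAtDist F X d → IsAtDist F Y d → ∀ k, countAtDist F X k = countAtDist F Y k

section Counting

theorem card_symmDiff_add_card (X A : Finset α) : #(X ∆ A) + #X = #A + 2 * #(X \ A) := by
  have hsymm : #(X ∆ A) = #(X \ A) + #(A \ X) := card_union_of_disjoint disjoint_sdiff_sdiff
  have hX := card_sdiff_add_card_inter X A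
  have hA := card_sdiff_add_card_inter A X
  rw [Finset.inter_comm] at hA
  omega

theorem card_symmDiff_add_card_of_subset {A : Finset α} (h : X ⊆ A) : #(X ∆ A) + #X = #A := by
  simp [card_symmDiff_add_card, sdiff_eq_empty_iff_subset.2 h]

theorem card_symmDiff_singleton_symmDiff (X A : Finset α) (p : α) :
    #((X ∆ {p}) ∆ A) + 1 = #(X ∆ A) + 2 * #({p} \ (X ∆ A)) := by
  have h := card_symmDiff_add_card {p} (X ∆ A)
  rwa [Finset.card_singleton, symmDiff_left_comm, ← symmDiff_assoc] at h

theorem coverCount_eq_zero_iff : coverCount F w X = 0 ↔ ∀ A ∈ F, #A = w → ¬X ⊆ A := by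
  simp [coverCount, filter_eq_empty_iff]

theorem coverCount_ne_zero_iff : coverCount F w X ≠ 0 ↔ ∃ A ∈ F, #A = w ∧ X ⊆ A := by
  simp [coverCount, filter_eq_empty_iff]

theorem coverCount_eq_sum (F : Finset (Finset α)) (w : ℕ) (X : Finset α) :
    coverCount F w X = ∑ A ∈ F with #A = w, if X ⊆ A then 1 else 0 := by
  rw [← card_filter, filter_filter, coverCount]

theorem sum_coverCount_insert [Fintype α] (F : Finset (Finset α)) (w : ℕ) (X : Finset α) :
    ∑ p ∈ Xᶜ, coverCount F w (insert p X) = (w - #X) * coverCount F w X := by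
  simp_rw [coverCount_eq_sum]
  rw [sum_comm, mul_sum]
  refine sum_congr rfl fun A hA => ?_
  obtain rfl : #A = w := (mem_filter.1 hA).2
  by_cases hXA : X ⊆ A
  · have hext : {p ∈ Xᶜ | insert p X ⊆ A} = A \ X := by
      ext p
      simp [Finset.insert_subset_iff, hXA, and_comm]
    rw [← card_filter, hext, card_sdiff_of_subset hXA, if_pos hXA, mul_one]
  · simp [Finset.insert_subset_iff, hXA]

theorem card_filter_erase_subset (X A : Finset α) :
    #{q ∈ X | X.erase q ⊆ A} =
      (if #(X \ A) = 1 then 1 else 0) + #X * if X ⊆ A then 1 else 0 := by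
  have herase (q : α) : X.erase q ⊆ A ↔ X \ A ⊆ {q} := by
    rw [erase_eq]
    exact sdiff_le_comm
  simp_rw [herase]
  by_cases hXA : X ⊆ A
  · simp [sdiff_eq_empty_iff_subset.2 hXA, hXA]
  · by_cases hone : #(X \ A) = 1
    · obtain ⟨p, hp⟩ := card_eq_one.1 hone
      have hpX : p ∈ X := (mem_sdiff.1 (hp ▸ mem_singleton_self p)).1
      simp [hp, hXA, filter_eq, hpX]
    · have hsub (q : α) : ¬X \ A ⊆ {q} := by
        rw [Finset.subset_singleton_iff, sdiff_eq_empty_iff_subset]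
        rintro (h | h)
        · exact hXA h
        · exact hone (by rw [h, Finset.card_singleton])
      simp [hsub, hXA, hone]

theorem sum_coverCount_erase (F : Finset (Finset α)) (w : ℕ) (X : Finset α) :
    ∑ q ∈ X, coverCount F w (X.erase q) = nearCoverCount F w X + #X * coverCount F w X := by
  have hnear : nearCoverCount F w X = ∑ A ∈ F with #A = w, if #(X \ A) = 1 then 1 else 0 := by
    rw [← card_filter, filter_filter, nearCoverCount]
  simp_rw [hnear, coverCount_eq_sum]
  rw [sum_comm, mul_sum, ← sum_add_distrib]
  refine sum_congr rfl fun A _ => ?_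
  rw [← card_filter, card_filter_erase_subset]

theorem IsDesign.sub_mul_coverCount [Fintype α] (h : IsDesign F w (t + 1) μ) (hX : #X = t) :
    (w - t) * coverCount F w X = (Fintype.card α - t) * μ := by
  have hins : ∀ p ∈ Xᶜ, coverCount F w (insert p X) = μ := fun p hp =>
    h _ (by rw [card_insert_of_notMem (mem_compl.1 hp), hX])
  have hsum := sum_coverCount_insert F w X
  rwa [sum_congr rfl hins, sum_const, card_compl, hX, smul_eq_mul, eq_comm] at hsum

theorem IsDesign.nearCoverCount_add (h : IsDesign F w t μ) (hY : #Y = t + 1) :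
    nearCoverCount F w Y + (t + 1) * coverCount F w Y = (t + 1) * μ := by
  have herase : ∀ q ∈ Y, coverCount F w (Y.erase q) = μ := fun q hq =>
    h _ (by rw [card_erase_of_mem hq, hY, Nat.add_sub_cancel])
  have hsum := sum_coverCount_erase F w Y
  rwa [sum_congr rfl herase, sum_const, hY, smul_eq_mul, eq_comm] at hsum

end Counting

section Separated

theorem IsSeparated.le_card (hF : IsSeparated F δ) (h0 : ∅ ∈ F) {A : Finset α} (hA : A ∈ F)
    (hne : A ≠ ∅) : δ ≤ #A := by
  simpa [← Finset.bot_eq_empty] using hF hA h0 hne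

theorem IsSeparated.le_card_of_subset (hF : IsSeparated F δ) (h0 : ∅ ∈ F) {A : Finset α}
    (hA : A ∈ F) (hXA : X ⊆ A) (hX : X.Nonempty) : δ ≤ #A :=
  hF.le_card h0 hA (hX.mono hXA).ne_empty

theorem IsSeparated.coverCount_eq_zero (hF : IsSeparated F δ) (h0 : ∅ ∈ F) (hw : 0 < w)
    (hwδ : w < δ) : coverCount F w X = 0 := by
  refine coverCount_eq_zero_iff.2 fun A hA hAw _ => ?_
  have hne : A ≠ ∅ := by rintro rfl; rw [Finset.card_empty] at hAw; omega
  have := hF.le_card h0 hA hne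
  omega

theorem IsSeparated.coverCount_le_one (hF : IsSeparated F δ) (hw : 2 * w < δ + 2 * #X) :
    coverCount F w X ≤ 1 := by
  refine card_le_one.2 fun A hA B hB => ?_
  obtain ⟨hA, hAw, hXA⟩ := mem_filter.1 hA
  obtain ⟨hB, hBw, hXB⟩ := mem_filter.1 hB
  by_contra hne
  have hdist := hF hA hB hne
  have hsymm := card_symmDiff_add_card A B
  have hsdiff : #(A \ B) ≤ #(A \ X) :=
    Finset.card_le_card (Finset.sdiff_subset_sdiff subset_rfl hXB)
  rw [card_sdiff_of_subset hXA] at hsdiff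
  have := Finset.card_le_card hXA
  omega

/-- Besides `∅`, a member at distance `k` from `X` missing `j` points of `X` has weight
`#X + k - 2 * j`, which is at least `δ` only for `j ≤ 1`. -/
theorem IsSeparated.countAtDist_eq (hF : IsSeparated F δ) (h0 : ∅ ∈ F) (hlo : 2 < #X + k)
    (hhi : #X + k < δ + 4) :
    countAtDist F X k =
      (if #X = k then 1 else 0) + nearCoverCount F (#X + k - 2) X + coverCount F (#X + k) X := by
  have hempty : (if #X = k then 1 else 0) = ∑ A ∈ F, if A = ∅ ∧ #X = k then 1 else 0 := by
    simp [ite_and, h0]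
  rw [hempty, countAtDist, nearCoverCount, coverCount]
  simp_rw [card_filter]
  rw [← sum_add_distrib, ← sum_add_distrib]
  refine sum_congr rfl fun A hA => ?_
  have hsymm := card_symmDiff_add_card X A
  have hsub : X ⊆ A ↔ #(X \ A) = 0 := by rw [card_eq_zero, sdiff_eq_empty_iff_subset]
  rcases eq_or_ne A ∅ with rfl | hne
  · simp only [Finset.card_empty, Finset.sdiff_empty] at hsymm hsub ⊢
    grind
  · have := hF.le_card h0 hA hne
    simp only [hne, hsub, false_and, if_false]
    grind

theorem IsSeparated.countAtDist_eq_of_lt (hF : IsSeparated F δ) (h0 : ∅ ∈ F) (hlo : 2 < #X + k)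
    (hhi : #X + k < δ + 2) :
    countAtDist F X k = (if #X = k then 1 else 0) + coverCount F (#X + k) X := by
  have hnear : nearCoverCount F (#X + k - 2) X = 0 := by
    refine card_eq_zero.2 (filter_eq_empty_iff.2 fun A hA => ?_)
    rintro ⟨hAw, -⟩
    have := hF.le_card h0 hA (by rintro rfl; rw [Finset.card_empty] at hAw; omega)
    omega
  rw [hF.countAtDist_eq h0 hlo (by omega), hnear, add_zero]

/-- Members not containing `X` are far enough from `X` by `hdδ`, except `∅`, for which `hdX` is
needed. -/
theorem IsSeparated.isAtDist (hF : IsSeparated F δ) (h0 : ∅ ∈ F)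
    (hmin : ∀ B ∈ F, X ⊆ B → d + #X ≤ #B) (hdδ : d + #X ≤ δ + 2) (hdX : d ≤ #X) {A : Finset α}
    (hA : A ∈ F) (hAd : #(X ∆ A) = d) : IsAtDist F X d := by
  refine ⟨⟨A, hA, hAd⟩, ?_⟩
  rintro _ ⟨B, hB, rfl⟩
  have hsymm := card_symmDiff_add_card X B
  change d ≤ #(X ∆ B)
  by_cases hXB : X ⊆ B
  · have := hmin B hB hXB
    omega
  · have hpos : 0 < #(X \ B) := card_pos.2 (Finset.sdiff_nonempty.2 hXB)
    rcases eq_or_ne B ∅ with rfl | hne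
    · rw [Finset.sdiff_empty] at hsymm
      omega
    · have := hF.le_card h0 hB hne
      omega

theorem IsSeparated.isAtDist_card (hF : IsSeparated F δ) (h0 : ∅ ∈ F) (hX : 2 * #X ≤ δ) :
    IsAtDist F X #X := by
  refine hF.isAtDist h0 (fun B hB hXB => ?_) (by omega) le_rfl h0
    (by simp [← Finset.bot_eq_empty])
  rcases eq_or_ne B ∅ with rfl | hne
  · simp [Finset.subset_empty.1 hXB]
  · have := hF.le_card h0 hB hne
    omega

end Separated

section Regular

theorem IsCompletelyRegularFamily.exists_card_eq (hr : IsCompletelyRegularFamily F) (h0 : ∅ ∈ F)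
    {A B : Finset α} (hA : A ∈ F) (hB : B ∈ F) : ∃ D ∈ F, #D = #(A ∆ B) := by
  have hdist {S : Finset α} (hS : S ∈ F) : IsAtDist F S 0 :=
    ⟨⟨S, hS, by simp⟩, fun _ _ => Nat.zero_le _⟩
  have hpos : countAtDist F ∅ #(A ∆ B) ≠ 0 := by
    rw [← hr (hdist hA) (hdist h0)]
    exact card_ne_zero_of_mem (mem_filter.2 ⟨hB, rfl⟩)
  obtain ⟨D, hD⟩ := Finset.card_ne_zero.1 hpos
  obtain ⟨hDF, hDcard⟩ := mem_filter.1 hD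
  exact ⟨D, hDF, by simpa [← Finset.bot_eq_empty] using hDcard⟩

/-- Flipping one coordinate of `X` brings each member at distance `d + 1` closer for exactly `d + 1`
choices of the coordinate. -/
theorem IsCompletelyRegularFamily.mul_countAtDist_succ_le [Fintype α]
    (hr : IsCompletelyRegularFamily F) (hX : IsAtDist F X (d + 1)) (hT : IsAtDist F T d) :
    (d + 1) * countAtDist F X (d + 1) ≤ Fintype.card α * countAtDist F T d := by
  have hflip (p : α) : countAtDist F (X ∆ {p}) d ≤ countAtDist F T d := by
    rcases eq_or_ne (countAtDist F (X ∆ {p}) d) 0 with hzero | hne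
    · simp [hzero]
    obtain ⟨A, hA⟩ := Finset.card_ne_zero.1 hne
    obtain ⟨hAF, hAd⟩ := mem_filter.1 hA
    refine (hr ⟨⟨A, hAF, hAd⟩, ?_⟩ hT d).le
    rintro _ ⟨B, hB, rfl⟩
    have hXB : d + 1 ≤ #(X ∆ B) := hX.2 ⟨B, hB, rfl⟩
    have := card_symmDiff_singleton_symmDiff X B p
    dsimp only
    omega
  calc (d + 1) * countAtDist F X (d + 1)
      ≤ ∑ p : α, countAtDist F (X ∆ {p}) d := by
        simp_rw [countAtDist, card_filter]
        rw [sum_comm, mul_sum]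
        refine sum_le_sum fun A _ => ?_
        split_ifs with hA
        · rw [← card_filter, mul_one, ← hA]
          refine Finset.card_le_card fun p hp => mem_filter.2 ⟨mem_univ p, ?_⟩
          have := card_symmDiff_singleton_symmDiff X A p
          rw [sdiff_eq_empty_iff_subset.2 (Finset.singleton_subset_iff.2 hp),
            Finset.card_empty] at this
          omega
        · simp
    _ ≤ ∑ _p : α, countAtDist F T d := sum_le_sum fun p _ => hflip p
    _ = Fintype.card α * countAtDist F T d := by simp

theorem IsSeparated.countAtDist_self (hF : IsSeparated F (2 * e)) (h0 : ∅ ∈ F) (he : 2 ≤ e)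
    (hT : #T = e) : countAtDist F T e = 1 + coverCount F (2 * e) T := by
  rw [hF.countAtDist_eq_of_lt h0 (by omega) (by omega), if_pos hT, hT, two_mul]

theorem IsCompletelyRegularFamily.exists_isDesign (hr : IsCompletelyRegularFamily F) (h0 : ∅ ∈ F)
    (hF : IsSeparated F (2 * e)) (he : 2 ≤ e) : ∃ μ, IsDesign F (2 * e) e μ := by
  by_cases hex : ∃ S : Finset α, #S = e
  · obtain ⟨S, hS⟩ := hex
    refine ⟨coverCount F (2 * e) S, fun T hT => ?_⟩
    have hdist {R : Finset α} (hR : #R = e) : IsAtDist F R e :=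
      hR ▸ hF.isAtDist_card h0 (by omega)
    have hcount := hr (hdist hT) (hdist hS) e
    rw [hF.countAtDist_self h0 he hT, hF.countAtDist_self h0 he hS] at hcount
    omega
  · exact ⟨0, fun T hT => absurd ⟨T, hT⟩ hex⟩

theorem IsSeparated.mul_le_of_isDesign [Fintype α] (hF : IsSeparated F (2 * e))
    (hμ : IsDesign F (2 * e) e μ) (he : e ≤ Fintype.card α) : e * μ ≤ Fintype.card α - e := by
  obtain ⟨T, -, hT⟩ := exists_subset_card_eq (s := (univ : Finset α)) he
  calc e * μ = ∑ p ∈ Tᶜ, coverCount F (2 * e) (insert p T) := by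
        rw [sum_coverCount_insert, hμ T hT, hT, two_mul, Nat.add_sub_cancel]
    _ ≤ #Tᶜ * 1 := sum_le_card_nsmul _ _ _ fun p hp => hF.coverCount_le_one (by
        rw [card_insert_of_notMem (mem_compl.1 hp)]
        omega)
    _ = Fintype.card α - e := by rw [mul_one, card_compl, hT]

end Regular

section CardSucc

theorem IsSeparated.isAtDist_of_covered (hF : IsSeparated F (2 * e)) (h0 : ∅ ∈ F)
    (hY : #Y = e + 1) (hcov : coverCount F (2 * e) Y ≠ 0) : IsAtDist F Y (e - 1) := by
  obtain ⟨A, hA, hAw, hYA⟩ := coverCount_ne_zero_iff.1 hcov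
  have hne : Y.Nonempty := card_pos.1 (by omega)
  have hYA_dist := card_symmDiff_add_card_of_subset hYA
  refine hF.isAtDist h0 (fun B hB hYB => ?_) (by omega) (by omega) hA (by omega)
  have := hF.le_card_of_subset h0 hB hYB hne
  omega

theorem IsSeparated.isAtDist_of_odd_covered (hF : IsSeparated F (2 * e)) (h0 : ∅ ∈ F)
    (hY : #Y = e + 1) (heven : coverCount F (2 * e) Y = 0)
    (hodd : coverCount F (2 * e + 1) Y ≠ 0) : IsAtDist F Y e := by
  obtain ⟨A, hA, hAw, hYA⟩ := coverCount_ne_zero_iff.1 hodd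
  have hne : Y.Nonempty := card_pos.1 (by omega)
  have hYA_dist := card_symmDiff_add_card_of_subset hYA
  refine hF.isAtDist h0 (fun B hB hYB => ?_) (by omega) (by omega) hA (by omega)
  have hB_ge := hF.le_card_of_subset h0 hB hYB hne
  have hB_ne := coverCount_eq_zero_iff.1 heven B hB
  grind

theorem IsSeparated.isAtDist_of_uncovered (hF : IsSeparated F (2 * e)) (h0 : ∅ ∈ F)
    (hY : #Y = e + 1) (heven : coverCount F (2 * e) Y = 0)
    (hodd : coverCount F (2 * e + 1) Y = 0) : IsAtDist F Y (e + 1) := by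
  have hne : Y.Nonempty := card_pos.1 (by omega)
  refine hF.isAtDist h0 (fun B hB hYB => ?_) (by omega) (by omega) h0
    (by simp [← Finset.bot_eq_empty, hY])
  have hB_ge := hF.le_card_of_subset h0 hB hYB hne
  have hB_ne_even := coverCount_eq_zero_iff.1 heven B hB
  have hB_ne_odd := coverCount_eq_zero_iff.1 hodd B hB
  grind

theorem IsSeparated.countAtDist_pred (hF : IsSeparated F (2 * e)) (h0 : ∅ ∈ F) (he : 1 ≤ e)
    (hY : #Y = e + 1) : countAtDist F Y e = coverCount F (2 * e + 1) Y := by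
  rw [hF.countAtDist_eq_of_lt h0 (by omega) (by omega), if_neg (by omega), zero_add, hY,
    show e + 1 + e = 2 * e + 1 by omega]

theorem IsSeparated.countAtDist_add_mul (hF : IsSeparated F (2 * e)) (h0 : ∅ ∈ F) (he : 1 ≤ e)
    (hμ : IsDesign F (2 * e) e μ) (hY : #Y = e + 1) :
    countAtDist F Y (e + 1) + (e + 1) * coverCount F (2 * e) Y =
      1 + (e + 1) * μ + coverCount F (2 * e + 2) Y := by
  rw [hF.countAtDist_eq h0 (by omega) (by omega), if_pos hY, hY,
    show e + 1 + (e + 1) = 2 * e + 2 by omega, Nat.add_sub_cancel, ← hμ.nearCoverCount_add hY]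
  omega

/-- A covered `Y` and an `(e - 1)`-subset of it are both at distance `e - 1` from `F`. -/
theorem IsCompletelyRegularFamily.coverCount_of_covered (hr : IsCompletelyRegularFamily F)
    (h0 : ∅ ∈ F) (hF : IsSeparated F (2 * e)) (he : 2 ≤ e) (hμ : IsDesign F (2 * e) e μ)
    (hpred : IsDesign F (2 * e) (e - 1) r) (hY : #Y = e + 1) (hcov : coverCount F (2 * e) Y ≠ 0) :
    coverCount F (2 * e + 1) Y = 0 ∧ coverCount F (2 * e + 2) Y + (e + 1) * μ = r + e := by
  obtain ⟨P, -, hP⟩ := exists_subset_card_eq (s := Y) (n := e - 1) (by omega)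
  have hYdist := hF.isAtDist_of_covered h0 hY hcov
  have hPdist : IsAtDist F P (e - 1) := hP ▸ hF.isAtDist_card h0 (by omega)
  have hone : coverCount F (2 * e) Y = 1 := by
    have := hF.coverCount_le_one (w := 2 * e) (X := Y) (by omega)
    omega
  have hP_e : countAtDist F P e = 0 := by
    rw [hF.countAtDist_eq_of_lt h0 (by omega) (by omega), if_neg (by omega),
      hF.coverCount_eq_zero h0 (by omega) (by omega)]
  have hP_succ : countAtDist F P (e + 1) = r := by
    rw [hF.countAtDist_eq_of_lt h0 (by omega) (by omega), if_neg (by omega), zero_add,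
      show #P + (e + 1) = 2 * e by omega, hpred P hP]
  have hY_succ := hF.countAtDist_add_mul h0 (by omega) hμ hY
  rw [hr hYdist hPdist, hP_succ, hone] at hY_succ
  refine ⟨?_, by omega⟩
  rw [← hF.countAtDist_pred h0 (by omega) hY, hr hYdist hPdist, hP_e]

/-- A `Y` contained in a member of weight `2 * e + 1` but in none of weight `2 * e` is at distance
`e` from `F`, like every `e`-set. -/
theorem IsCompletelyRegularFamily.coverCount_of_odd_covered (hr : IsCompletelyRegularFamily F)
    (h0 : ∅ ∈ F) (hF : IsSeparated F (2 * e)) (he : 2 ≤ e) (hμ : IsDesign F (2 * e) e μ)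
    (hT : #T = e) (hY : #Y = e + 1) (heven : coverCount F (2 * e) Y = 0)
    (hodd : coverCount F (2 * e + 1) Y ≠ 0) :
    coverCount F (2 * e + 1) Y = 1 + μ ∧
      1 + (e + 1) * μ + coverCount F (2 * e + 2) Y = coverCount F (2 * e + 1) T := by
  have hYdist := hF.isAtDist_of_odd_covered h0 hY heven hodd
  have hTdist : IsAtDist F T e := hT ▸ hF.isAtDist_card h0 (by omega)
  constructor
  · rw [← hF.countAtDist_pred h0 (by omega) hY, hr hYdist hTdist, hF.countAtDist_self h0 he hT,
      hμ T hT]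
  · have hY_succ := hF.countAtDist_add_mul h0 (by omega) hμ hY
    rw [heven, mul_zero, add_zero, hr hYdist hTdist, hF.countAtDist_eq_of_lt h0 (by omega)
      (by omega), if_neg (by omega), zero_add, hT, show e + (e + 1) = 2 * e + 1 by omega] at hY_succ
    exact hY_succ.symm

theorem IsCompletelyRegularFamily.mul_coverCount_odd_add_le [Fintype α]
    (hr : IsCompletelyRegularFamily F) (h0 : ∅ ∈ F) (hF : IsSeparated F (2 * e)) (he : 2 ≤ e)
    (hμ : IsDesign F (2 * e) e μ) (hpred : IsDesign F (2 * e) (e - 1) r) (hT : #T = e) :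
    (e + 1) * coverCount F (2 * e + 1) T + (1 + μ) * (e * μ) ≤
      (Fintype.card α - e) * (1 + μ) := by
  have hins : ∀ p ∈ Tᶜ, coverCount F (2 * e + 1) (insert p T) +
      (1 + μ) * coverCount F (2 * e) (insert p T) ≤ 1 + μ := by
    intro p hp
    have hY : #(insert p T) = e + 1 := by rw [card_insert_of_notMem (mem_compl.1 hp), hT]
    by_cases heven : coverCount F (2 * e) (insert p T) = 0
    · by_cases hodd : coverCount F (2 * e + 1) (insert p T) = 0
      · simp [heven, hodd]
      · simp [heven, (hr.coverCount_of_odd_covered h0 hF he hμ hT hY heven hodd).1]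
    · rw [(hr.coverCount_of_covered h0 hF he hμ hpred hY heven).1, zero_add]
      exact mul_le_of_le_one_right (Nat.zero_le _) (hF.coverCount_le_one (by omega))
  have hsum := sum_le_card_nsmul _ _ _ hins
  rwa [sum_add_distrib, ← mul_sum, sum_coverCount_insert, sum_coverCount_insert, hμ T hT, hT,
    card_compl, hT, smul_eq_mul, show 2 * e + 1 - e = e + 1 by omega,
    show 2 * e - e = e by omega] at hsum

end CardSucc

section LengthSixteen

variable [Fintype α]

theorem IsDesign.pair (hα : Fintype.card α = 16) (hμ : IsDesign F 6 3 (2 * k)) :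
    IsDesign F 6 2 (7 * k) := by
  intro P hP
  have := hμ.sub_mul_coverCount hP
  rw [hα] at this
  omega

theorem IsDesign.eq_two_or_four (hα : Fintype.card α = 16) (hF : IsSeparated F 6)
    (hμ : IsDesign F 6 3 μ) (hex : ∃ A ∈ F, #A = 6) : μ = 2 ∨ μ = 4 := by
  obtain ⟨A, hA, hA6⟩ := hex
  obtain ⟨T, hTA, hT⟩ := exists_subset_card_eq (s := A) (n := 3) (by omega)
  obtain ⟨P, -, hP⟩ := exists_subset_card_eq (s := A) (n := 2) (by omega)
  have hpos : μ ≠ 0 := hμ T hT ▸ coverCount_ne_zero_iff.2 ⟨A, hA, hA6, hTA⟩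
  have hle : 3 * μ ≤ Fintype.card α - 3 := hF.mul_le_of_isDesign (e := 3) hμ (by omega)
  have heven : 4 * coverCount F 6 P = (Fintype.card α - 2) * μ := hμ.sub_mul_coverCount hP
  rw [hα] at hle heven
  omega

theorem IsCompletelyRegularFamily.coverCount_seven_eq_zero (hα : Fintype.card α = 16)
    (hr : IsCompletelyRegularFamily F) (h0 : ∅ ∈ F) (hF : IsSeparated F 6)
    (hμ : IsDesign F 6 3 2) (hY : #Y = 4) (heven : coverCount F 6 Y = 0) :
    coverCount F 7 Y = 0 := by
  by_contra hodd
  obtain ⟨T, -, hT⟩ := exists_subset_card_eq (s := Y) (n := 3) (by omega)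
  have hcount : 1 + 4 * 2 + coverCount F 8 Y = coverCount F 7 T :=
    (hr.coverCount_of_odd_covered (e := 3) h0 hF (by omega) hμ hT hY heven hodd).2
  have hbound : 4 * coverCount F 7 T + 3 * (3 * 2) ≤ (Fintype.card α - 3) * 3 :=
    hr.mul_coverCount_odd_add_le (e := 3) h0 hF (by omega) hμ (hμ.pair (k := 1) hα) hT
  omega

theorem IsCompletelyRegularFamily.coverCount_eight_of_uncovered (hα : Fintype.card α = 16)
    (hr : IsCompletelyRegularFamily F) (h0 : ∅ ∈ F) (hF : IsSeparated F 6)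
    (hμ : IsDesign F 6 3 2) :
    ∃ n ≤ 3, ∀ Y, #Y = 4 → coverCount F 6 Y = 0 → coverCount F 8 Y = n := by
  by_cases hex : ∃ Z, #Z = 4 ∧ coverCount F 6 Z = 0
  · obtain ⟨Z, hZ, hZ6⟩ := hex
    have hdist {Y : Finset α} (hY : #Y = 4) (hY6 : coverCount F 6 Y = 0) : IsAtDist F Y 4 :=
      hF.isAtDist_of_uncovered (e := 3) h0 hY hY6 (hr.coverCount_seven_eq_zero hα h0 hF hμ hY hY6)
    have hcount {Y : Finset α} (hY : #Y = 4) (hY6 : coverCount F 6 Y = 0) :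
        countAtDist F Y 4 = 9 + coverCount F 8 Y := by
      have : countAtDist F Y 4 + 4 * coverCount F 6 Y = 1 + 4 * 2 + coverCount F 8 Y :=
        hF.countAtDist_add_mul (e := 3) h0 (by omega) hμ hY
      omega
    refine ⟨coverCount F 8 Z, ?_, fun Y hY hY6 => ?_⟩
    · obtain ⟨T, -, hT⟩ := exists_subset_card_eq (s := Z) (n := 3) (by omega)
      have hTdist : IsAtDist F T 3 := hT ▸ hF.isAtDist_card h0 (by omega)
      have hTcount : countAtDist F T 3 = 1 + coverCount F 6 T :=
        hF.countAtDist_self (e := 3) h0 (by omega) hT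
      have hle := hr.mul_countAtDist_succ_le (hdist hZ hZ6) hTdist
      rw [hcount hZ hZ6, hTcount, hμ T hT, hα] at hle
      omega
    · have := hr (hdist hY hY6) (hdist hZ hZ6) 4
      rw [hcount hY hY6, hcount hZ hZ6] at this
      omega
  · exact ⟨0, by omega, fun Y hY hY6 => absurd ⟨Y, hY, hY6⟩ hex⟩

theorem IsCompletelyRegularFamily.not_isDesign_two (hα : Fintype.card α = 16)
    (hr : IsCompletelyRegularFamily F) (h0 : ∅ ∈ F) (hF : IsSeparated F 6) :
    ¬IsDesign F 6 3 2 := by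
  intro hμ
  obtain ⟨n, hn, huncovered⟩ := hr.coverCount_eight_of_uncovered hα h0 hF hμ
  obtain ⟨T, -, hT⟩ := exists_subset_card_eq (s := (univ : Finset α)) (n := 3) (by simp [hα])
  have hins : ∀ p ∈ Tᶜ, coverCount F 8 (insert p T) + n * coverCount F 6 (insert p T) =
      2 * coverCount F 6 (insert p T) + n := by
    intro p hp
    have hY : #(insert p T) = 4 := by rw [card_insert_of_notMem (mem_compl.1 hp), hT]
    by_cases hY6 : coverCount F 6 (insert p T) = 0
    · simp [hY6, huncovered _ hY hY6]
    · have hone := hF.coverCount_le_one (w := 6) (X := insert p T) (by omega)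
      have hcovered : coverCount F 8 (insert p T) + 4 * 2 = 7 + 3 :=
        (hr.coverCount_of_covered (e := 3) h0 hF (by omega) hμ (hμ.pair (k := 1) hα) hY hY6).2
      rw [show coverCount F 6 (insert p T) = 1 by omega]
      omega
  have hsum := sum_congr rfl hins
  rw [sum_add_distrib, sum_add_distrib, ← mul_sum, ← mul_sum, sum_coverCount_insert,
    sum_coverCount_insert, hμ T hT, hT, sum_const, card_compl, hT, hα, smul_eq_mul] at hsum
  omega

theorem IsCompletelyRegularFamily.isDesign_four (hα : Fintype.card α = 16)
    (hr : IsCompletelyRegularFamily F) (h0 : ∅ ∈ F) (hF : IsSeparated F 6)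
    (hex : ∃ A ∈ F, ∃ B ∈ F, #(A ∆ B) = 6) : IsDesign F 6 3 4 := by
  obtain ⟨A, hA, B, hB, hAB⟩ := hex
  obtain ⟨D, hD, hDcard⟩ := hr.exists_card_eq h0 hA hB
  obtain ⟨μ, hμ⟩ : ∃ μ, IsDesign F 6 3 μ := hr.exists_isDesign (e := 3) h0 hF (by omega)
  rcases hμ.eq_two_or_four hα hF ⟨D, hD, hDcard.trans hAB⟩ with rfl | rfl
  · exact absurd hμ (hr.not_isDesign_two hα h0 hF)
  · exact hμ

theorem IsDesign.card_filter_card_eq (hα : Fintype.card α = 16) (h : IsDesign F 6 3 4) :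
    #{A ∈ F | #A = 6} = 112 := by
  have hpair : IsDesign F 6 2 14 := h.pair (k := 2) hα
  have hpoint : IsDesign F 6 1 42 := fun P hP => by
    have := hpair.sub_mul_coverCount hP
    omega
  have hall := hpoint.sub_mul_coverCount (X := ∅) Finset.card_empty
  simp only [coverCount, Finset.empty_subset, and_true, hα] at hall
  omega

end LengthSixteen

section Support

variable {ι : Type*} [Fintype ι] [DecidableEq ι]

/-- A binary word is identified with its support. -/
def supportEquiv (ι : Type*) [Fintype ι] [DecidableEq ι] : (ι → ZMod 2) ≃ Finset ι where
  toFun x := {i | x i ≠ 0}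
  invFun A i := if i ∈ A then 1 else 0
  left_inv x := by
    have hbit : ∀ a : ZMod 2, (if a ≠ 0 then 1 else 0) = a := by decide
    ext i
    simp [hbit]
  right_inv A := by ext i; simp

theorem mem_supportEquiv {x : ι → ZMod 2} {i : ι} : i ∈ supportEquiv ι x ↔ x i ≠ 0 := by
  simp [supportEquiv]

theorem card_supportEquiv (x : ι → ZMod 2) : #(supportEquiv ι x) = hammingNorm x := rfl

theorem supportEquiv_zero : supportEquiv ι 0 = ∅ := by simp [supportEquiv]

theorem card_symmDiff_supportEquiv (x y : ι → ZMod 2) :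
    #(supportEquiv ι x ∆ supportEquiv ι y) = hammingDist x y := by
  have hbits : ∀ a b : ZMod 2, (a ≠ 0 ∧ ¬b ≠ 0 ∨ b ≠ 0 ∧ ¬a ≠ 0) ↔ a ≠ b := by decide
  unfold hammingDist
  congr 1
  ext i
  simp only [Finset.mem_symmDiff, mem_supportEquiv, hbits, mem_filter, Finset.mem_univ, true_and]

open Classical in
/-- The family of supports of the words of `C`. -/
noncomputable def supportFamily (C : Set (ι → ZMod 2)) : Finset (Finset ι) :=
  {A | (supportEquiv ι).symm A ∈ C}

theorem supportEquiv_mem_supportFamily {C : Set (ι → ZMod 2)} {x : ι → ZMod 2} :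
    supportEquiv ι x ∈ supportFamily C ↔ x ∈ C := by
  simp [supportFamily]

theorem ncard_sep_eq_card_filter_supportFamily (C : Set (ι → ZMod 2)) {p : (ι → ZMod 2) → Prop}
    {q : Finset ι → Prop} [DecidablePred q] (hpq : ∀ x, q (supportEquiv ι x) ↔ p x) :
    {c ∈ C | p c}.ncard = #{A ∈ supportFamily C | q A} := by
  rw [← Set.ncard_coe_finset, ← Set.ncard_image_of_injective _ (supportEquiv ι).injective]
  congr 1
  ext A
  obtain ⟨x, rfl⟩ := (supportEquiv ι).surjective A
  simp [supportEquiv_mem_supportFamily, hpq]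

theorem ncard_hammingDist_eq (C : Set (ι → ZMod 2)) (x : ι → ZMod 2) (k : ℕ) :
    {c ∈ C | hammingDist x c = k}.ncard =
      countAtDist (supportFamily C) (supportEquiv ι x) k :=
  ncard_sep_eq_card_filter_supportFamily C fun c => by rw [card_symmDiff_supportEquiv]

variable {m : ℕ} {C : Set (Fin m → ZMod 2)}

theorem IsAtDist.distToCode_eq {x : Fin m → ZMod 2}
    (h : IsAtDist (supportFamily C) (supportEquiv (Fin m) x) d) : distToCode C x = d := by
  rw [← h.csInf_eq, distToCode]
  congr 1
  ext n
  simp only [Set.mem_image, Finset.mem_coe, (supportEquiv (Fin m)).surjective.exists,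
    supportEquiv_mem_supportFamily, card_symmDiff_supportEquiv, Set.mem_ofPred_eq]

theorem isCompletelyRegularFamily_supportFamily (hC : IsCompletelyRegular C) :
    IsCompletelyRegularFamily (supportFamily C) := by
  intro X Y d hX hY k
  obtain ⟨x, rfl⟩ := (supportEquiv (Fin m)).surjective X
  obtain ⟨y, rfl⟩ := (supportEquiv (Fin m)).surjective Y
  rw [← ncard_hammingDist_eq, ← ncard_hammingDist_eq]
  exact hC x y (hX.distToCode_eq.trans hY.distToCode_eq.symm) k

theorem isSeparated_supportFamily (hC : IsMinDist C δ) : IsSeparated (supportFamily C) δ := by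
  intro A hA B hB hne
  obtain ⟨x, rfl⟩ := (supportEquiv (Fin m)).surjective A
  obtain ⟨y, rfl⟩ := (supportEquiv (Fin m)).surjective B
  rw [Finset.mem_coe, supportEquiv_mem_supportFamily] at hA hB
  rw [card_symmDiff_supportEquiv]
  exact hC.1 x hA y hB (ne_of_apply_ne _ hne)

theorem exists_card_symmDiff_eq_of_isMinDist (hC : IsMinDist C δ) :
    ∃ A ∈ supportFamily C, ∃ B ∈ supportFamily C, #(A ∆ B) = δ := by
  obtain ⟨x, hx, y, hy, -, hxy⟩ := hC.2
  exact ⟨_, supportEquiv_mem_supportFamily.2 hx, _, supportEquiv_mem_supportFamily.2 hy,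
    (card_symmDiff_supportEquiv x y).trans hxy⟩

end Support

end SetCode

/-- In a binary completely regular code of length 16 with minimum distance 6
containing `0`, the weight-6 codewords form a 3-(16,6,4) design; in particular
there are 112 codewords of weight 6. -/
theorem stmt_14 (C : Set (Fin 16 → ZMod 2)) (h0 : (0 : Fin 16 → ZMod 2) ∈ C)
    (hreg : IsCompletelyRegular C) (hd : IsMinDist C 6) :
    (∀ T : Finset (Fin 16), T.card = 3 →
      {β ∈ C | hammingNorm β = 6 ∧ ∀ i ∈ T, β i ≠ 0}.ncard = 4) ∧
    {β ∈ C | hammingNorm β = 6}.ncard = 112 := by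
  have hempty : ∅ ∈ SetCode.supportFamily C := by
    rwa [← SetCode.supportEquiv_zero, SetCode.supportEquiv_mem_supportFamily]
  have hdesign : SetCode.IsDesign (SetCode.supportFamily C) 6 3 4 :=
    (SetCode.isCompletelyRegularFamily_supportFamily hreg).isDesign_four (Fintype.card_fin 16)
      hempty (SetCode.isSeparated_supportFamily hd)
      (SetCode.exists_card_symmDiff_eq_of_isMinDist hd)
  constructor
  · intro T hT
    rw [← hdesign T hT, SetCode.coverCount]
    refine SetCode.ncard_sep_eq_card_filter_supportFamily C fun x => ?_
    simp only [SetCode.card_supportEquiv, Finset.subset_iff, SetCode.mem_supportEquiv]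
  · rw [← hdesign.card_filter_card_eq (Fintype.card_fin 16)]
    exact SetCode.ncard_sep_eq_card_filter_supportFamily C fun x => by
      rw [SetCode.card_supportEquiv]
end
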